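/- arXiv:2603.12186 — 4 statements merged into one kernel-verified Lean document; each statement's English description precedes it below -/
import Mathlib

section
/- For every T > 0 there exists a constant C_T ∈ (0, ∞) such that for all t with 0 < t ≤ T and all x, y ∈ [0,1], the time derivative series of the Neumann heat kernel satisfies |2·∑_{k=1}^∞ k²π²·e^{−k²π²t}·cos(kπx)·cos(kπy)| ≤ C_T · t^{−3/2} · exp(−(x−y)²/(8t)); equivalently, |∂_t G^N_t(x,y)| ≤ C_T · t^{−3/2} · exp(−(x−y)²/(8t)). -/
open Real MeasureTheory

/-- The time-derivative series of the Neumann heat kernel on `[0,1]`: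
termwise `t`-differentiation of `G^N_t(x,y) = 1 + 2 ∑_{k≥1} e^{-k²π²t} cos(kπx) cos(kπy)`
gives `∂_t G^N_t(x,y) = -2 ∑_{k≥1} k²π² e^{-k²π²t} cos(kπx) cos(kπy)`, whose absolute value
equals that of `2 ∑_{k≥1} k²π² e^{-k²π²t} cos(kπx) cos(kπy)`. -/
noncomputable def GNderivT (t x y : ℝ) : ℝ :=
  2 * ∑' k : ℕ, (k + 1 : ℝ) ^ 2 * π ^ 2 * Real.exp (-((k + 1 : ℝ) ^ 2 * π ^ 2 * t)) *
      Real.cos ((k + 1 : ℝ) * π * x) * Real.cos ((k + 1 : ℝ) * π * y)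

open Complex in
/-- complexified theta function -/
noncomputable def thF (z : ℝ) (w : ℂ) : ℂ := jacobiTheta₂ (z / 2) (π * I * w)

open Complex in
lemma thF_hasDerivAt (z : ℝ) (w : ℂ) (hw : 0 < w.re) :
    HasDerivAt (thF z) (jacobiTheta₂_fderiv (z / 2) (π * I * w) (0, π * I)) w := by
  have him : 0 < (π * I * w : ℂ).im := by
    simp; positivity
  have h1 := hasFDerivAt_jacobiTheta₂ (z / 2) him
  have h2 : HasDerivAt (fun w : ℂ => (((z : ℂ) / 2, π * I * w) : ℂ × ℂ)) (0, π * I) w := by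
    refine (hasDerivAt_const w _).prodMk ?_
    simpa using (hasDerivAt_id w).const_mul (π * I : ℂ)
  exact h1.comp_hasDerivAt w h2

open Complex in
lemma thF_deriv_hasSum (z t : ℝ) (ht : 0 < t) :
    HasSum (fun k : ℕ => (k + 1 : ℝ) ^ 2 * π ^ 2 * Real.exp (-((k + 1 : ℝ) ^ 2 * π ^ 2 * t)) *
      Real.cos ((k + 1 : ℝ) * π * z)) (-(deriv (thF z) t).re / 2) := by
  have him : 0 < (π * I * t : ℂ).im := by
    simp; positivity
  rw [(thF_hasDerivAt z t (by simpa using ht)).deriv]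
  have h := hasSum_jacobiTheta₂_term_fderiv ((z : ℂ) / 2) him
  have h1 := h.mapL (ContinuousLinearMap.apply ℂ ℂ ((0, π * I) : ℂ × ℂ))
  simp only [ContinuousLinearMap.apply_apply] at h1
  have h2 := h1.nat_add_neg
  have h3 := (Complex.hasSum_re h2)
  rw [← hasSum_nat_add_iff' 1] at h3
  have h4 := h3.mul_left (-1 / 2)
  have e : ∀ n : ℤ, (jacobiTheta₂_term_fderiv n ((z : ℂ) / 2) (π * I * t) (0, π * I)).re =
      - ((n : ℝ) ^ 2 * π ^ 2 * Real.exp (-((n : ℝ) ^ 2 * π ^ 2 * t)) *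
      Real.cos ((n : ℝ) * π * z)) := by
    intro n
    have e1 : (2 * π * I * n * ((z : ℂ) / 2) + π * I * n ^ 2 * (π * I * t)) =
      ((-((n : ℝ) ^ 2 * π ^ 2 * t) : ℝ) : ℂ) + ((n * π * z : ℝ) : ℂ) * I := by
      push_cast
      linear_combination (π * n ^ 2 * π * t : ℂ) * I_sq
    have e2 : jacobiTheta₂_term_fderiv n ((z : ℂ) / 2) (π * I * t) (0, π * I) =
       cexp (2 * π * I * n * ((z : ℂ) / 2) + π * I * n ^ 2 * (π * I * t)) *
        ((-((n : ℝ) ^ 2 * π ^ 2) : ℝ) : ℂ) := by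
      simp [jacobiTheta₂_term_fderiv]
      linear_combination (cexp (2 * π * I * n * ((z : ℂ) / 2) + π * I * n ^ 2 * (π * I * t)) * π * n ^ 2 * π : ℂ) * I_sq
    rw [e2, e1, Complex.re_mul_ofReal, Complex.exp_re]
    simp only [add_re, ofReal_re, re_ofReal_mul, I_re, mul_zero, add_zero, add_im, ofReal_im,
      im_ofReal_mul, I_im, mul_one, zero_add]
    ring
  have e0 : (jacobiTheta₂_term_fderiv 0 ((z : ℂ) / 2) (π * I * t) (0, π * I)) = 0 := by
    simp [jacobiTheta₂_term_fderiv]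
  convert! h4 using 1
  · ext k
    simp only [add_re, e]
    push_cast
    rw [neg_mul, neg_mul, Real.cos_neg]
    ring
  · simp [e0]
    ring

lemma gauss_summable (T : ℝ) (hT : 0 < T) :
    Summable (fun n : ℤ => Real.exp (1 / (6 * T)) * Real.exp (-(n : ℝ) ^ 2 / (12 * T))) := by
  apply Summable.mul_left
  have := summable_pow_mul_jacobiTheta₂_term_bound 0 (T := 1 / (12 * T * π)) (by positivity) 0
  refine this.congr fun n => ?_
  rw [pow_zero, one_mul]
  congr 1
  field_simp
  ring

open Complex in
lemma thF_bound (T t z d : ℝ) (ht : 0 < t) (htT : t ≤ T) (hz : |z| ≤ 2)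
    (hd : ∀ n : ℤ, d ^ 2 ≤ (2 * n - z) ^ 2) (w : ℂ) (hw : w ∈ Metric.sphere (t : ℂ) (t / 2)) :
    ‖thF z w‖ ≤ t ^ (-(1 / 2) : ℝ) * (Real.exp (-d ^ 2 / (8 * t)) *
      ∑' n : ℤ, Real.exp (1 / (6 * T)) * Real.exp (-(n : ℝ) ^ 2 / (12 * T))) := by
  have hT : 0 < T := ht.trans_le htT
  have hw1 : (w.re - t) ^ 2 + w.im ^ 2 = t ^ 2 / 4 := by
    have : ‖w - t‖ = t / 2 := by simpa [dist_eq_norm] using hw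
    have h2 : ‖w - t‖ ^ 2 = t ^ 2 / 4 := by rw [this]; ring
    rw [Complex.sq_norm, Complex.normSq_apply] at h2
    simp at h2
    linarith
  have hlo : t / 2 ≤ w.re := by nlinarith [abs_le_of_sq_le_sq' (a := w.re - t) (b := t / 2) (by nlinarith [sq_nonneg w.im]) (by linarith)]
  have hhi : w.re ≤ 3 * t / 2 := by nlinarith [abs_le_of_sq_le_sq' (a := w.re - t) (b := t / 2) (by nlinarith [sq_nonneg w.im]) (by linarith)]
  have hwre : 0 < w.re := by linarith
  have hw0 : w ≠ 0 := by rintro rfl; simp at hwre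
  have hpi : (π : ℂ) ≠ 0 := by exact_mod_cast Real.pi_ne_zero
  have hinv : 2 / (3 * t) ≤ (w⁻¹).re := by
    rw [Complex.inv_re, Complex.normSq_apply, div_le_div_iff₀ (by positivity) (by nlinarith [sq_nonneg w.im])]
    nlinarith
  have key : thF z w = 1 / (π * w) ^ (1 / 2 : ℂ) * ∑' n : ℤ, cexp (-π / (π * w) * (n + I * (I * z / 2)) ^ 2) := by
    rw [← Complex.tsum_exp_neg_quadratic (by simp; positivity), thF, jacobiTheta₂]
    refine tsum_congr fun n => ?_
    rw [jacobiTheta₂_term]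
    congr 1
    linear_combination (π * n ^ 2 * π * w : ℂ) * I_sq
  rw [key, norm_mul]
  refine mul_le_mul ?_ ?_ (norm_nonneg _) (by positivity)
  · have hne : (π * w : ℂ) ≠ 0 := mul_ne_zero hpi hw0
    have e : ‖(π * w : ℂ) ^ (1 / 2 : ℂ)‖ = ‖(π * w : ℂ)‖ ^ (1 / 2 : ℝ) := by
      have := Complex.norm_cpow_real (π * w : ℂ) (1 / 2)
      simpa using this
    rw [norm_div, e, norm_one, Real.rpow_neg ht.le, ← one_div]
    have : t ≤ ‖(π * w : ℂ)‖ := by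
      have h1 : (π * w : ℂ).re ≤ ‖(π * w : ℂ)‖ := Complex.re_le_norm _
      have h2 : (π * w : ℂ).re = π * w.re := by simp
      nlinarith [Real.pi_gt_three]
    gcongr
  · rw [← tsum_mul_left]
    refine tsum_of_norm_bounded ((gauss_summable T hT).mul_left _).hasSum fun n => ?_
    have e : (-π / (π * w) * (n + I * (I * z / 2)) ^ 2 : ℂ) =
        ((-((2 * n - z) ^ 2 / 4) : ℝ) : ℂ) * w⁻¹ := by
      have : (n + I * (I * z / 2) : ℂ) = n - z / 2 := by linear_combination (z / 2 : ℂ) * I_sq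
      rw [this]
      push_cast
      field_simp
      ring
    rw [e, Complex.norm_exp, Complex.re_ofReal_mul, ← Real.exp_add, ← Real.exp_add, Real.exp_le_exp]
    have hs := hd n
    have hz2 : z ^ 2 ≤ 4 := by
      have := sq_le_sq' (abs_le.1 hz).1 (abs_le.1 hz).2
      linarith
    have hs2 : 2 * (n : ℝ) ^ 2 - 4 ≤ (2 * n - z) ^ 2 := by nlinarith [sq_nonneg ((n : ℝ) - z)]
    set s := (2 * (n : ℝ) - z) ^ 2
    have hs0 : 0 ≤ s := sq_nonneg _
    have a1 : s / 4 * (2 / (3 * t)) ≤ s / 4 * (w⁻¹).re := by gcongr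
    have a2 : s / 4 * (2 / (3 * t)) = s / (8 * t) + s / (24 * t) := by field_simp; ring
    have a3 : d ^ 2 / (8 * t) ≤ s / (8 * t) := by gcongr
    have a4 : s / (24 * T) ≤ s / (24 * t) := by gcongr
    have a5 : (2 * (n : ℝ) ^ 2 - 4) / (24 * T) ≤ s / (24 * T) := by gcongr
    have a6 : (2 * (n : ℝ) ^ 2 - 4) / (24 * T) = -(1 / (6 * T) + -(n : ℝ) ^ 2 / (12 * T)) := by
      field_simp; ring
    have a7 : -d ^ 2 / (8 * t) = - (d ^ 2 / (8 * t)) := by ring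
    rw [a7]
    linarith

lemma thF_deriv_bound (T t z d : ℝ) (ht : 0 < t) (htT : t ≤ T) (hz : |z| ≤ 2)
    (hd : ∀ n : ℤ, d ^ 2 ≤ (2 * n - z) ^ 2) :
    |(deriv (thF z) t).re| ≤ 2 * (∑' n : ℤ, Real.exp (1 / (6 * T)) * Real.exp (-(n : ℝ) ^ 2 / (12 * T)))
      * t ^ (-(3 / 2) : ℝ) * Real.exp (-d ^ 2 / (8 * t)) := by
  have hdc : DiffContOnCl ℂ (thF z) (Metric.ball (t : ℂ) (t / 2)) := by
    apply DifferentiableOn.diffContOnCl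
    intro w hw
    have hw := Metric.closure_ball_subset_closedBall hw
    have h1 : ‖w - t‖ ≤ t / 2 := by simpa [dist_eq_norm] using hw
    have h2 := (abs_le.1 ((Complex.abs_re_le_norm (w - t)).trans h1)).1
    simp at h2
    exact (thF_hasDerivAt z w (by linarith)).differentiableAt.differentiableWithinAt
  have h := Complex.norm_deriv_le_of_forall_mem_sphere_norm_le (by positivity) hdc
    (thF_bound T t z d ht htT hz hd)
  refine (Complex.abs_re_le_norm _).trans (h.trans (le_of_eq ?_))
  have : t ^ (-(3 / 2) : ℝ) = t ^ (-(1 / 2) : ℝ) / t := by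
    rw [← Real.rpow_sub_one ht.ne']; norm_num
  rw [this]
  field_simp

theorem neumann_kernel_time_derivative_bound (T : ℝ) (hT : 0 < T) :
    ∃ C : ℝ, 0 < C ∧ ∀ t x y : ℝ, 0 < t → t ≤ T →
      x ∈ Set.Icc (0 : ℝ) 1 → y ∈ Set.Icc (0 : ℝ) 1 →
      |GNderivT t x y| ≤ C * t ^ (-(3/2) : ℝ) * Real.exp (-(x - y) ^ 2 / (8 * t)) := by
  have hpos : 0 < ∑' n : ℤ, Real.exp (1 / (6 * T)) * Real.exp (-(n : ℝ) ^ 2 / (12 * T)) :=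
    (gauss_summable T hT).tsum_pos (fun n => by positivity) 0 (by positivity)
  refine ⟨_, mul_pos two_pos hpos, fun t x y ht htT hx hy => ?_⟩
  obtain ⟨hx0, hx1⟩ := hx
  obtain ⟨hy0, hy1⟩ := hy
  have hcase : ∀ n : ℤ, (n : ℝ) ≤ -1 ∨ n = 0 ∨ (1 : ℝ) ≤ n := by
    intro n
    rcases lt_trichotomy n 0 with h | h | h
    · left; exact_mod_cast (by omega : n ≤ -1)
    · right; left; exact h
    · right; right; exact_mod_cast h
  have b1 := thF_deriv_bound T t (x - y) (x - y) ht htT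
    (abs_le.2 ⟨by linarith, by linarith⟩) (by
      intro n
      rcases hcase n with h | rfl | h
      · nlinarith
      · apply le_of_eq; push_cast; ring
      · nlinarith)
  have b2 := thF_deriv_bound T t (x + y) (x - y) ht htT
    (abs_le.2 ⟨by linarith, by linarith⟩) (by
      intro n
      have e : (2 * (n : ℝ) - (x + y)) ^ 2 - (x - y) ^ 2 = 4 * ((n - x) * (n - y)) := by ring
      have : 0 ≤ ((n : ℝ) - x) * (n - y) := by
        rcases hcase n with h | rfl | h
        · exact mul_nonneg_of_nonpos_of_nonpos (by linarith) (by linarith)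
        · simp; positivity
        · exact mul_nonneg (by linarith) (by linarith)
      linarith)
  have s := (thF_deriv_hasSum (x - y) t ht).add (thF_deriv_hasSum (x + y) t ht)
  have e : GNderivT t x y = -(deriv (thF (x - y)) t).re / 2 + -(deriv (thF (x + y)) t).re / 2 := by
    rw [← s.tsum_eq, GNderivT, ← tsum_mul_left]
    refine tsum_congr fun k => ?_
    rw [mul_sub, mul_add, Real.cos_sub, Real.cos_add]
    ring
  rw [e]
  rw [abs_le] at *
  constructor <;> linarith [b1.1, b1.2, b2.1, b2.2]
end

section
/- For every β ∈ (0, 1/4) and every T > 0 there exists a constant C > 0 (depending only on β and T) such that for all s, t, t̄ with 0 ≤ s < min(t, t̄) and t, t̄ ≤ T, and all x̄, y ∈ [0,1], writing t₀ := min(t, t̄), one has ∫ₛ^{t₀} ∫₀¹ (G^N_{t−θ}(x̄,r) − G^N_{t̄−θ}(x̄,r))² · p_{θ−s}(y − r)² dr dθ ≤ C · |t − t̄|^{2β} · (t₀ − s)^{−1/2−2β}. -/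
open Real MeasureTheory

/-- The standard one-dimensional heat kernel `p_t(x) = (4πt)^{-1/2} exp(-x²/(4t))`. -/
noncomputable def heatKernel (t x : ℝ) : ℝ :=
  (4 * π * t) ^ (-(1/2) : ℝ) * Real.exp (-x ^ 2 / (4 * t))

/-- The Neumann heat kernel on `[0,1]`:
`G^N_t(x,y) = 1 + 2 ∑_{k=1}^∞ e^{-k²π²t} cos(kπx) cos(kπy)`. -/
noncomputable def GN (t x y : ℝ) : ℝ :=
  1 + 2 * ∑' k : ℕ, Real.exp (-((k + 1 : ℝ) ^ 2 * π ^ 2 * t)) *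
      Real.cos ((k + 1 : ℝ) * π * x) * Real.cos ((k + 1 : ℝ) * π * y)

namespace NK

lemma one_sub_exp_le (β a : ℝ) (hβ0 : 0 < β) (hβ1 : β < 1/4) (ha : 0 ≤ a) :
    1 - Real.exp (-a) ≤ a ^ β := by
  rcases le_total a 1 with h | h
  · have h1 : a ≤ a ^ β := by
      rcases eq_or_lt_of_le ha with h0 | h0
      · rw [← h0]; exact Real.rpow_nonneg le_rfl _
      · have := Real.rpow_le_rpow_of_exponent_ge h0 h (by linarith : β ≤ 1)
        simpa using this
    have := Real.add_one_le_exp (-a)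
    linarith
  · have := Real.one_le_rpow h hβ0.le
    have := Real.exp_pos (-a)
    linarith

lemma rpow_mul_exp_le (β a : ℝ) (hβ0 : 0 < β) (hβ1 : β < 1/4) (ha : 0 ≤ a) :
    a ^ β * Real.exp (-a) ≤ 2 * Real.exp (-a/2) := by
  have h1 : a ^ β ≤ 1 + a := by
    rcases le_total a 1 with h | h
    · have := Real.rpow_le_one ha h hβ0.le
      linarith
    · have := Real.rpow_le_rpow_of_exponent_le h (by linarith : β ≤ 1)
      simp at this; linarith
  have h2 := Real.add_one_le_exp (a/2)
  have h3 : Real.exp (-a/2) = Real.exp (a/2) * Real.exp (-a) := by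
    rw [← Real.exp_add]; congr 1; ring
  rw [h3, ← mul_assoc]
  exact mul_le_mul_of_nonneg_right (by linarith) (Real.exp_pos _).le

noncomputable def q (u : ℝ) (k : ℕ) : ℝ := Real.exp (-((k + 1 : ℝ) ^ 2 * π ^ 2 * u)/2)

lemma q_nonneg (u : ℝ) (k : ℕ) : 0 ≤ q u k := (Real.exp_pos _).le

lemma q_le_one (u : ℝ) (hu : 0 < u) (k : ℕ) : q u k ≤ 1 := by
  unfold q
  apply Real.exp_le_one_iff.2
  have : 0 ≤ (k + 1 : ℝ) ^ 2 * π ^ 2 * u := by positivity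
  linarith

lemma q_le (u : ℝ) (hu : 0 < u) (k : ℕ) :
    q u k ≤ 2 / √u * (1 / (1 + (k:ℝ) * √u) - 1 / (1 + ((k+1 : ℕ):ℝ) * √u)) := by
  have hw : 0 < √u := Real.sqrt_pos.2 hu
  have hw2 : √u ^ 2 = u := Real.sq_sqrt hu.le
  set w := √u
  set m : ℝ := (k : ℝ) with hm
  have hm0 : 0 ≤ m := Nat.cast_nonneg k
  have h1 : q u k ≤ 1 / (1 + ((m+1)*w)^2) := by
    unfold q
    rw [neg_div, Real.exp_neg, ← one_div]
    apply one_div_le_one_div_of_le (by positivity)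
    have h2 := Real.add_one_le_exp ((m + 1 : ℝ) ^ 2 * π ^ 2 * u / 2)
    refine le_trans ?_ h2
    have : (2:ℝ) ≤ π^2 := by nlinarith [Real.pi_gt_three]
    have h3 : (m+1)^2 * u * 2 ≤ (m+1)^2 * u * π^2 := by gcongr
    rw [mul_pow, hw2]
    linarith
  refine h1.trans ?_
  push_cast
  have e : 2 / w * (1 / (1 + m * w) - 1 / (1 + (m+1) * w)) = 2 / ((1 + m * w) * (1 + (m+1) * w)) := by
    field_simp; ring
  rw [e, div_le_div_iff₀ (by positivity) (by positivity)]
  nlinarith [sq_nonneg ((m+1)*w - 1), mul_nonneg hm0 hw.le, mul_pos hw hw, mul_nonneg hm0 (mul_pos hw hw).le]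

lemma q_sum_le (u : ℝ) (hu : 0 < u) (n : ℕ) : ∑ k ∈ Finset.range n, q u k ≤ 2 / √u := by
  have hw : 0 < √u := Real.sqrt_pos.2 hu
  calc _ ≤ ∑ k ∈ Finset.range n, 2 / √u * (1 / (1 + (k:ℝ) * √u) - 1 / (1 + ((k+1 : ℕ):ℝ) * √u)) :=
        Finset.sum_le_sum fun k _ => q_le u hu k
    _ = 2 / √u * (1 - 1 / (1 + (n:ℝ) * √u)) := by
        rw [← Finset.mul_sum, Finset.sum_range_sub' (fun k : ℕ => 1 / (1 + (k:ℝ) * √u))]; simp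
    _ ≤ 2 / √u * 1 := by
        gcongr
        have : 0 ≤ 1 / (1 + (n:ℝ) * √u) := by positivity
        linarith
    _ = _ := mul_one _

lemma q_summable (u : ℝ) (hu : 0 < u) : Summable (q u) :=
  summable_of_sum_range_le (q_nonneg u) (q_sum_le u hu)

lemma q_tsum_le (u : ℝ) (hu : 0 < u) : ∑' k, q u k ≤ 2 / √u :=
  Real.tsum_le_of_sum_range_le (q_nonneg u) (q_sum_le u hu)

noncomputable def c (u h : ℝ) (k : ℕ) : ℝ :=
  Real.exp (-((k + 1 : ℝ) ^ 2 * π ^ 2 * u)) - Real.exp (-((k + 1 : ℝ) ^ 2 * π ^ 2 * (u + h)))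

lemma c_abs_le (β u h : ℝ) (hβ0 : 0 < β) (hβ1 : β < 1/4) (hu : 0 < u) (hh : 0 ≤ h) (k : ℕ) :
    |c u h k| ≤ 2 * (h/u)^β * q u k := by
  set l : ℝ := (k + 1 : ℝ) ^ 2 * π ^ 2 with hl
  have hl0 : 0 < l := by positivity
  have e1 : c u h k = Real.exp (-(l*u)) * (1 - Real.exp (-(l*h))) := by
    unfold c
    rw [mul_sub, ← Real.exp_add, mul_one]; congr 2; ring
  have h0 : 0 ≤ 1 - Real.exp (-(l*h)) := by
    have : Real.exp (-(l*h)) ≤ 1 := Real.exp_le_one_iff.2 (by have := mul_nonneg hl0.le hh; linarith)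
    linarith
  rw [e1, abs_of_nonneg (mul_nonneg (Real.exp_pos _).le h0)]
  have h1 := one_sub_exp_le β (l*h) hβ0 hβ1 (by positivity)
  have h2 := rpow_mul_exp_le β (l*u) hβ0 hβ1 (by positivity)
  have e2 : (l*h)^β = (h/u)^β * (l*u)^β := by
    rw [← Real.mul_rpow (by positivity) (by positivity)]; congr 1; field_simp
  calc _ ≤ Real.exp (-(l*u)) * ((h/u)^β * (l*u)^β) := by
        rw [← e2]; gcongr
    _ = (h/u)^β * ((l*u)^β * Real.exp (-(l*u))) := by ring
    _ ≤ (h/u)^β * (2 * Real.exp (-(l*u)/2)) := by gcongr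
    _ = _ := by unfold q; rw [hl]; ring

lemma exp_summable (u : ℝ) (hu : 0 < u) : Summable fun k : ℕ => Real.exp (-((k + 1 : ℝ) ^ 2 * π ^ 2 * u)) := by
  refine (q_summable u hu).of_nonneg_of_le (fun _ => (Real.exp_pos _).le) fun k => ?_
  unfold q
  apply Real.exp_le_exp.2
  have : 0 ≤ (k + 1 : ℝ) ^ 2 * π ^ 2 * u := by positivity
  linarith

lemma term_summable (a : ℕ → ℝ) (ha : Summable fun k => |a k|) (x r : ℝ) :
    Summable fun k : ℕ => a k * Real.cos ((k + 1 : ℝ) * π * x) * Real.cos ((k + 1 : ℝ) * π * r) := by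
  refine Summable.of_norm_bounded ha fun k => ?_
  rw [Real.norm_eq_abs, abs_mul, abs_mul, mul_assoc]
  have h1 := Real.abs_cos_le_one ((k + 1 : ℝ) * π * x)
  have h2 := Real.abs_cos_le_one ((k + 1 : ℝ) * π * r)
  exact mul_le_of_le_one_right (abs_nonneg _) (mul_le_one₀ h1 (abs_nonneg _) h2)

lemma GN_sub (u h x r : ℝ) (hu : 0 < u) (hh : 0 ≤ h) :
    GN u x r - GN (u + h) x r =
      2 * ∑' k : ℕ, c u h k * Real.cos ((k + 1 : ℝ) * π * x) * Real.cos ((k + 1 : ℝ) * π * r) := by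
  unfold GN
  have s1 := term_summable _ (exp_summable u hu).abs x r
  have s2 := term_summable _ (exp_summable (u+h) (by linarith)).abs x r
  have := s1.tsum_sub s2
  have e : ∀ k : ℕ, c u h k * Real.cos ((k + 1 : ℝ) * π * x) * Real.cos ((k + 1 : ℝ) * π * r)
    = Real.exp (-((k + 1 : ℝ) ^ 2 * π ^ 2 * u)) * Real.cos ((k + 1 : ℝ) * π * x) * Real.cos ((k + 1 : ℝ) * π * r)
     - Real.exp (-((k + 1 : ℝ) ^ 2 * π ^ 2 * (u+h))) * Real.cos ((k + 1 : ℝ) * π * x) * Real.cos ((k + 1 : ℝ) * π * r) := by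
    intro k; unfold c; ring
  simp_rw [e]
  rw [this]; ring

lemma c_summable (u h : ℝ) (hu : 0 < u) (hh : 0 ≤ h) : Summable fun k => |c u h k| :=
  ((exp_summable u hu).sub (exp_summable (u+h) (by linarith))).abs

lemma GN_sub_abs_le (β u h x r : ℝ) (hβ0 : 0 < β) (hβ1 : β < 1/4) (hu : 0 < u) (hh : 0 ≤ h) :
    |GN u x r - GN (u + h) x r| ≤ 8 * (h/u)^β / √u := by
  rw [GN_sub u h x r hu hh, abs_mul, abs_two]
  have hs : Summable fun k => 2 * (h/u)^β * q u k := (q_summable u hu).mul_left _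
  have := tsum_of_norm_bounded (f := fun k : ℕ => c u h k * Real.cos ((k + 1 : ℝ) * π * x) * Real.cos ((k + 1 : ℝ) * π * r)) hs.hasSum (fun k => by
    refine le_trans ?_ (c_abs_le β u h hβ0 hβ1 hu hh k)
    rw [Real.norm_eq_abs, abs_mul, abs_mul, mul_assoc]
    have h1 := Real.abs_cos_le_one ((k + 1 : ℝ) * π * x)
    have h2 := Real.abs_cos_le_one ((k + 1 : ℝ) * π * r)
    exact mul_le_of_le_one_right (abs_nonneg _) (mul_le_one₀ h1 (abs_nonneg _) h2))
  rw [tsum_mul_left, Real.norm_eq_abs] at this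
  have h3 := mul_le_mul_of_nonneg_left (q_tsum_le u hu) (by positivity : 0 ≤ 2 * (h/u)^β)
  calc _ ≤ 2 * (2 * (h/u)^β * (2 / √u)) := by linarith
    _ = _ := by ring

lemma int_cos (n : ℤ) (hn : n ≠ 0) : ∫ r in (0:ℝ)..1, Real.cos ((n:ℝ) * π * r) = 0 := by
  have hn' : (n:ℝ) * π ≠ 0 := mul_ne_zero (by exact_mod_cast hn) Real.pi_ne_zero
  rw [intervalIntegral.integral_comp_mul_left (fun x => Real.cos x) hn']
  simp [Real.sin_int_mul_pi]

lemma int_cos_cos (k l : ℕ) : ∫ r in (0:ℝ)..1, Real.cos ((k + 1 : ℝ) * π * r) * Real.cos ((l + 1 : ℝ) * π * r)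
    = if l = k then 1/2 else 0 := by
  have e : ∀ r : ℝ, Real.cos ((k + 1 : ℝ) * π * r) * Real.cos ((l + 1 : ℝ) * π * r) =
      (1/2) * (Real.cos ((((k:ℤ) - l : ℤ):ℝ) * π * r) + Real.cos ((((k:ℤ) + l + 2 : ℤ):ℝ) * π * r)) := by
    intro r
    have h1 : (((k:ℤ) - l : ℤ):ℝ) * π * r = (k + 1 : ℝ) * π * r - (l + 1 : ℝ) * π * r := by push_cast; ring
    have h2 : (((k:ℤ) + l + 2 : ℤ):ℝ) * π * r = (k + 1 : ℝ) * π * r + (l + 1 : ℝ) * π * r := by push_cast; ring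
    rw [h1, h2, Real.cos_sub, Real.cos_add]; ring
  simp_rw [e]
  rw [intervalIntegral.integral_const_mul, intervalIntegral.integral_add
    (by apply Continuous.intervalIntegrable; fun_prop) (by apply Continuous.intervalIntegrable; fun_prop),
    int_cos ((k:ℤ) + l + 2) (by positivity)]
  split_ifs with h
  · subst h; simp
  · rw [int_cos _ (by omega)]; simp

lemma norm_mul_cos_le (a b y : ℝ) (h : |b| ≤ 1) : ‖a * b * Real.cos y‖ ≤ |a| := by
  rw [Real.norm_eq_abs, abs_mul, abs_mul, mul_assoc]
  exact mul_le_of_le_one_right (abs_nonneg _) (mul_le_one₀ h (abs_nonneg _) (Real.abs_cos_le_one _))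

lemma S_cont (a : ℕ → ℝ) (ha : Summable fun k => |a k|) :
    Continuous fun r : ℝ => ∑' k : ℕ, a k * Real.cos ((k + 1 : ℝ) * π * r) := by
  refine continuous_tsum (fun k => by fun_prop) ha fun k r => ?_
  simpa using norm_mul_cos_le (a k) 1 ((k + 1 : ℝ) * π * r) (by simp)

lemma swap (a : ℕ → ℝ) (ha : Summable fun k => |a k|) (f : ℝ → ℝ) (hf : Continuous f) :
    ∫ r in (0:ℝ)..1, (∑' k : ℕ, a k * Real.cos ((k + 1 : ℝ) * π * r)) * f r =
      ∑' k : ℕ, a k * ∫ r in (0:ℝ)..1, Real.cos ((k + 1 : ℝ) * π * r) * f r := by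
  obtain ⟨M, hM⟩ := (isCompact_uIcc (a := (0:ℝ)) (b := 1)).exists_bound_of_continuousOn hf.continuousOn
  have hM0 : 0 ≤ M := (norm_nonneg _).trans (hM 0 (by simp))
  have := intervalIntegral.hasSum_integral_of_dominated_convergence (μ := volume) (a := 0) (b := 1)
    (F := fun (k : ℕ) r => a k * Real.cos ((k + 1 : ℝ) * π * r) * f r)
    (f := fun r => (∑' k : ℕ, a k * Real.cos ((k + 1 : ℝ) * π * r)) * f r)
    (fun k _ => |a k| * M)
    (fun k => by apply Continuous.aestronglyMeasurable; fun_prop)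
    (fun k => by
      refine Filter.Eventually.of_forall fun r hr => ?_
      rw [norm_mul]
      have h1 := norm_mul_cos_le (a k) 1 ((k + 1 : ℝ) * π * r) (by simp)
      rw [mul_one] at h1
      exact mul_le_mul h1 (hM r (Set.uIoc_subset_uIcc hr)) (norm_nonneg _) (abs_nonneg _))
    (Filter.Eventually.of_forall fun r hr => ha.mul_right M)
    (by simp)
    (by
      refine Filter.Eventually.of_forall fun r hr => ?_
      apply HasSum.mul_right
      apply Summable.hasSum
      refine Summable.of_norm_bounded ha fun k => ?_
      simpa using norm_mul_cos_le (a k) 1 ((k + 1 : ℝ) * π * r) (by simp))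
  rw [← this.tsum_eq]
  congr 1; ext k
  rw [← intervalIntegral.integral_const_mul]
  congr 1; ext r; ring

lemma parseval (a : ℕ → ℝ) (ha : Summable fun k => |a k|) :
    ∫ r in (0:ℝ)..1, (∑' k : ℕ, a k * Real.cos ((k + 1 : ℝ) * π * r))^2 = 1/2 * ∑' k, a k ^ 2 := by
  simp_rw [sq]
  rw [swap a ha _ (S_cont a ha), ← tsum_mul_left]
  congr 1; ext k
  have e : ∫ r in (0:ℝ)..1, Real.cos ((k + 1 : ℝ) * π * r) * (∑' k : ℕ, a k * Real.cos ((k + 1 : ℝ) * π * r))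
     = a k * (1/2) := by
    simp_rw [mul_comm (Real.cos _) (tsum _)]
    rw [swap a ha (fun r => Real.cos ((k + 1 : ℝ) * π * r)) (by fun_prop)]
    simp_rw [int_cos_cos]
    rw [tsum_eq_single k]
    · simp
    · intro b hb; simp [Ne.symm hb]
  rw [e]; ring

lemma GN_sub_cont (u h x : ℝ) (hu : 0 < u) (hh : 0 ≤ h) :
    Continuous fun r => GN u x r - GN (u + h) x r := by
  simp_rw [fun r => GN_sub u h x r hu hh]
  refine continuous_const.mul (S_cont _ ?_)
  refine Summable.of_nonneg_of_le (fun _ => abs_nonneg _) (fun k => ?_) (c_summable u h hu hh)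
  rw [abs_mul]
  exact mul_le_of_le_one_right (abs_nonneg _) (Real.abs_cos_le_one _)

lemma GN_sub_int_le (β u h x : ℝ) (hβ0 : 0 < β) (hβ1 : β < 1/4) (hu : 0 < u) (hh : 0 ≤ h) :
    ∫ r in (0:ℝ)..1, (GN u x r - GN (u + h) x r)^2 ≤ 16 * ((h/u)^β)^2 / √u := by
  simp_rw [fun r => GN_sub u h x r hu hh, mul_pow]
  have hle : ∀ k : ℕ, |c u h k * Real.cos ((k + 1 : ℝ) * π * x)| ≤ |c u h k| := fun k => by
    rw [abs_mul]
    exact mul_le_of_le_one_right (abs_nonneg _) (Real.abs_cos_le_one _)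
  have hs := Summable.of_nonneg_of_le (fun _ => abs_nonneg _) hle (c_summable u h hu hh)
  rw [intervalIntegral.integral_const_mul, parseval _ hs]
  have hb : ∀ k : ℕ, (c u h k * Real.cos ((k + 1 : ℝ) * π * x))^2 ≤ 4 * ((h/u)^β)^2 * q u k := fun k => by
    have h1 := (hle k).trans (c_abs_le β u h hβ0 hβ1 hu hh k)
    rw [← sq_abs]
    calc _ ≤ (2 * (h/u)^β * q u k)^2 := by gcongr
      _ = 4 * ((h/u)^β)^2 * (q u k * q u k) := by ring
      _ ≤ 4 * ((h/u)^β)^2 * (q u k * 1) := by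
          have := q_nonneg u k
          have := q_le_one u hu k
          gcongr
      _ = _ := by ring
  have hs2 := (q_summable u hu).mul_left (4 * ((h/u)^β)^2)
  have h2 := Summable.tsum_le_tsum hb (hs2.of_nonneg_of_le (fun _ => sq_nonneg _) hb) hs2
  rw [tsum_mul_left] at h2
  have h3 := mul_le_mul_of_nonneg_left (q_tsum_le u hu) (by positivity : 0 ≤ 4 * ((h/u)^β)^2)
  calc _ ≤ 2^2 * (1/2 * (4 * ((h/u)^β)^2 * (2 / √u))) := by gcongr; exact h2.trans h3
    _ = _ := by ring

lemma hk_sq (v z : ℝ) (hv : 0 < v) : heatKernel v z ^ 2 = (4*π*v)⁻¹ * Real.exp (-(1/(2*v)) * z^2) := by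
  unfold heatKernel
  rw [mul_pow, ← Real.rpow_natCast, ← Real.rpow_mul (by positivity), ← Real.exp_nat_mul]
  congr 1
  · norm_num [Real.rpow_neg_one]
  · congr 1; push_cast; field_simp; ring

lemma hk_sq_le (v z : ℝ) (hv : 0 < v) : heatKernel v z ^ 2 ≤ v⁻¹ := by
  rw [hk_sq v z hv]
  have h1 : Real.exp (-(1/(2*v)) * z^2) ≤ 1 := Real.exp_le_one_iff.2 (by
    have : 0 ≤ (1/(2*v)) * z^2 := by positivity
    linarith)
  have h2 : (4*π*v)⁻¹ ≤ v⁻¹ := by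
    apply inv_anti₀ hv; nlinarith [Real.pi_gt_three]
  calc _ ≤ v⁻¹ * 1 := by gcongr
    _ = _ := mul_one _

lemma hk_cont (v y : ℝ) : Continuous fun r => heatKernel v (y - r) ^ 2 := by
  unfold heatKernel; fun_prop

lemma hk_int_le (v y : ℝ) (hv : 0 < v) : ∫ r in (0:ℝ)..1, heatKernel v (y - r) ^ 2 ≤ 1 / √v := by
  simp_rw [fun r => hk_sq v (y - r) hv]
  rw [intervalIntegral.integral_const_mul, intervalIntegral.integral_of_le zero_le_one]
  have hb : 0 < 1/(2*v) := by positivity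
  have hi : Integrable (fun r : ℝ => Real.exp (-(1/(2*v)) * (y - r)^2)) :=
    (integrable_exp_neg_mul_sq hb).comp_sub_left y
  have h1 : ∫ r in Set.Ioc (0:ℝ) 1, Real.exp (-(1/(2*v)) * (y - r)^2) ≤ √(π/(1/(2*v))) := by
    rw [← integral_gaussian, ← integral_sub_left_eq_self (fun r : ℝ => Real.exp (-(1/(2*v)) * r^2)) volume y]
    exact setIntegral_le_integral hi (Filter.Eventually.of_forall fun r => (Real.exp_pos _).le)
  have h2 : √(π/(1/(2*v))) ≤ 4 * π * √v := by
    apply Real.sqrt_le_iff.2 ⟨by positivity, ?_⟩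
    rw [mul_pow, Real.sq_sqrt hv.le]
    have : π/(1/(2*v)) = 2 * π * v := by field_simp
    rw [this]
    gcongr
    nlinarith [Real.pi_gt_three]
  calc _ ≤ (4*π*v)⁻¹ * (4 * π * √v) := by gcongr; exact h1.trans h2
    _ = √v / v := by field_simp
    _ = _ := by rw [Real.sqrt_div_self, one_div]

lemma A_bound (β u h v x y : ℝ) (hβ0 : 0 < β) (hβ1 : β < 1/4) (hu : 0 < u) (hh : 0 ≤ h) (hv : 0 < v) :
    ∫ r in (0:ℝ)..1, (GN u x r - GN (u + h) x r)^2 * heatKernel v (y - r) ^ 2 ≤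
      64 * h^(2*β) * u^(-1-2*β) * v^(-(1/2):ℝ) := by
  have hc := GN_sub_cont u h x hu hh
  have e : (8 * (h/u)^β / √u)^2 = 64 * h^(2*β) * u^(-1-2*β) := by
    rw [div_pow, Real.sq_sqrt hu.le, mul_pow, ← Real.rpow_mul_natCast (by positivity), Real.div_rpow hh hu.le,
      sub_eq_add_neg, Real.rpow_add hu, Real.rpow_neg_one, Real.rpow_neg hu.le]
    push_cast
    rw [mul_comm β 2]; field_simp; norm_num; ring
  calc _ ≤ ∫ r in (0:ℝ)..1, (8 * (h/u)^β / √u)^2 * heatKernel v (y - r) ^ 2 := by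
        apply intervalIntegral.integral_mono_on zero_le_one
        · exact ((hc.pow 2).mul (hk_cont v y)).intervalIntegrable _ _
        · exact (continuous_const.mul (hk_cont v y)).intervalIntegrable _ _
        · intro r _
          apply mul_le_mul_of_nonneg_right _ (sq_nonneg _)
          rw [← sq_abs]
          exact pow_le_pow_left₀ (abs_nonneg _) (GN_sub_abs_le β u h x r hβ0 hβ1 hu hh) 2
    _ = (8 * (h/u)^β / √u)^2 * ∫ r in (0:ℝ)..1, heatKernel v (y - r) ^ 2 :=
        intervalIntegral.integral_const_mul _ _
    _ ≤ (8 * (h/u)^β / √u)^2 * (1 / √v) := by gcongr; exact hk_int_le v y hv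
    _ = _ := by rw [e, Real.rpow_neg hv.le, ← Real.sqrt_eq_rpow, one_div]

lemma B_bound (β u h v x y : ℝ) (hβ0 : 0 < β) (hβ1 : β < 1/4) (hu : 0 < u) (hh : 0 ≤ h) (hv : 0 < v) :
    ∫ r in (0:ℝ)..1, (GN u x r - GN (u + h) x r)^2 * heatKernel v (y - r) ^ 2 ≤
      16 * h^(2*β) * u^(-(1/2)-2*β) * v⁻¹ := by
  have hc := GN_sub_cont u h x hu hh
  have e : 16 * ((h/u)^β)^2 / √u = 16 * h^(2*β) * u^(-(1/2)-2*β) := by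
    rw [← Real.rpow_mul_natCast (by positivity), Real.div_rpow hh hu.le,
      sub_eq_add_neg, Real.rpow_add hu, Real.rpow_neg hu.le, Real.rpow_neg hu.le, Real.sqrt_eq_rpow]
    push_cast
    rw [mul_comm β 2]; field_simp
  calc _ ≤ ∫ r in (0:ℝ)..1, (GN u x r - GN (u + h) x r)^2 * v⁻¹ := by
        apply intervalIntegral.integral_mono_on zero_le_one
        · exact ((hc.pow 2).mul (hk_cont v y)).intervalIntegrable _ _
        · exact ((hc.pow 2).mul continuous_const).intervalIntegrable _ _
        · intro r _
          exact mul_le_mul_of_nonneg_left (hk_sq_le v _ hv) (sq_nonneg _)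
    _ = (∫ r in (0:ℝ)..1, (GN u x r - GN (u + h) x r)^2) * v⁻¹ :=
        intervalIntegral.integral_mul_const _ _
    _ ≤ (16 * ((h/u)^β)^2 / √u) * v⁻¹ := by gcongr; exact GN_sub_int_le β u h x hβ0 hβ1 hu hh
    _ = _ := by rw [e]

lemma AB_bound (β u h v x y : ℝ) (hβ0 : 0 < β) (hβ1 : β < 1/4) (hu : 0 < u) (hh : 0 ≤ h) (hv : 0 < v) :
    ∫ r in (0:ℝ)..1, (GN u x r - GN (u + h) x r)^2 * heatKernel v (y - r) ^ 2 ≤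
      64 * h^(2*β) * ((u+v)/2)^(-1-2*β) * v^(-(1/2):ℝ) +
      16 * h^(2*β) * ((u+v)/2)⁻¹ * u^(-(1/2)-2*β) := by
  rcases le_total v u with hvu | hvu
  · refine (A_bound β u h v x y hβ0 hβ1 hu hh hv).trans ?_
    have : u^(-1-2*β) ≤ ((u+v)/2)^(-1-2*β) :=
      Real.rpow_le_rpow_of_nonpos (by positivity) (by linarith) (by linarith)
    have h2 : 0 ≤ 16 * h^(2*β) * ((u+v)/2)⁻¹ * u^(-(1/2)-2*β) := by positivity
    have h3 : 64 * h^(2*β) * u^(-1-2*β) * v^(-(1/2):ℝ) ≤ 64 * h^(2*β) * ((u+v)/2)^(-1-2*β) * v^(-(1/2):ℝ) := by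
      gcongr
    linarith
  · refine (B_bound β u h v x y hβ0 hβ1 hu hh hv).trans ?_
    have : v⁻¹ ≤ ((u+v)/2)⁻¹ := inv_anti₀ (by positivity) (by linarith)
    have h2 : 0 ≤ 64 * h^(2*β) * ((u+v)/2)^(-1-2*β) * v^(-(1/2):ℝ) := by positivity
    have h3 : 16 * h^(2*β) * u^(-(1/2)-2*β) * v⁻¹ ≤ 16 * h^(2*β) * u^(-(1/2)-2*β) * ((u+v)/2)⁻¹ := by
      gcongr
    linarith

noncomputable def K (β : ℝ) : ℝ := 128 * 2^(1+2*β) + 32 / (1/2-2*β)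

lemma main (β s t h x y : ℝ) (hβ0 : 0 < β) (hβ1 : β < 1/4) (hst : s < t) (hh : 0 ≤ h) :
    (∫ θ in s..t, ∫ r in (0 : ℝ)..1,
          (GN (t - θ) x r - GN (t - θ + h) x r) ^ 2 * (heatKernel (θ - s) (y - r)) ^ 2) ≤
        K β * h ^ (2 * β) * (t - s) ^ (-(1/2) - 2 * β) := by
  have hL : 0 < t - s := by linarith
  set a1 := 64 * h^(2*β) * ((t-s)/2)^(-1-2*β) with ha1
  set a2 := 16 * h^(2*β) * ((t-s)/2)⁻¹ with ha2
  have i1 : IntervalIntegrable (fun θ => (θ - s)^(-(1/2):ℝ)) volume s t := by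
    have := (intervalIntegral.intervalIntegrable_rpow' (a := 0) (b := t - s) (r := -(1/2)) (by norm_num)).comp_sub_right s
    simpa using this
  have i2 : IntervalIntegrable (fun θ => (t - θ)^(-(1/2)-2*β)) volume s t := by
    have := (intervalIntegral.intervalIntegrable_rpow' (a := t - s) (b := 0) (r := -(1/2)-2*β) (by linarith)).comp_sub_left t
    simpa using this
  have v1 : ∫ θ in s..t, (θ - s)^(-(1/2):ℝ) = 2 * (t-s)^(1/2:ℝ) := by
    rw [intervalIntegral.integral_comp_sub_right (fun θ => θ^(-(1/2):ℝ)), integral_rpow (by left; norm_num)]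
    norm_num; ring
  have v2 : ∫ θ in s..t, (t - θ)^(-(1/2)-2*β) = (t-s)^(1/2-2*β) / (1/2-2*β) := by
    rw [intervalIntegral.integral_comp_sub_left (fun θ => θ^(-(1/2)-2*β)), integral_rpow (by left; linarith)]
    have : -(1/2)-2*β + 1 = 1/2-2*β := by ring
    rw [this, sub_self, Real.zero_rpow (by linarith), sub_zero]
  have ig : IntervalIntegrable (fun θ => a1 * (θ - s)^(-(1/2):ℝ) + a2 * (t - θ)^(-(1/2)-2*β)) volume s t :=
    (i1.const_mul a1).add (i2.const_mul a2)
  calc _ ≤ ∫ θ in s..t, (a1 * (θ - s)^(-(1/2):ℝ) + a2 * (t - θ)^(-(1/2)-2*β)) := by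
        rw [intervalIntegral.integral_of_le hst.le, intervalIntegral.integral_of_le hst.le,
          integral_Ioc_eq_integral_Ioo, integral_Ioc_eq_integral_Ioo]
        apply integral_mono_of_nonneg
        · refine Filter.Eventually.of_forall fun θ => ?_
          exact intervalIntegral.integral_nonneg zero_le_one fun r _ => by positivity
        · exact ((intervalIntegrable_iff_integrableOn_Ioo_of_le hst.le).1 ig)
        · refine (ae_restrict_iff' measurableSet_Ioo).2 (Filter.Eventually.of_forall fun θ hθ => ?_)
          have := AB_bound β (t - θ) h (θ - s) x y hβ0 hβ1 (by linarith [hθ.2]) hh (by linarith [hθ.1])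
          rw [show t - θ + (θ - s) = t - s by ring] at this
          exact this
    _ = a1 * (2 * (t-s)^(1/2:ℝ)) + a2 * ((t-s)^(1/2-2*β) / (1/2-2*β)) := by
        rw [intervalIntegral.integral_add (i1.const_mul a1) (i2.const_mul a2),
          intervalIntegral.integral_const_mul, intervalIntegral.integral_const_mul, v1, v2]
    _ = _ := by
        have p1 : ((t-s)/2)^(-1-2*β) = 2^(1+2*β) * (t-s)^(-1-2*β) := by
          rw [Real.div_rpow hL.le (by norm_num), show (-1-2*β) = -(1+2*β) by ring, Real.rpow_neg (by norm_num : (0:ℝ) ≤ 2)]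
          field_simp
        have p2 : (t-s)^(-(1/2)-2*β) = (t-s)^(-1-2*β) * (t-s)^(1/2:ℝ) := by
          rw [← Real.rpow_add hL]; congr 1; ring
        have p3 : (t-s)^(-(1/2)-2*β) = (t-s)⁻¹ * (t-s)^(1/2-2*β) := by
          rw [← Real.rpow_neg_one, ← Real.rpow_add hL]; congr 1; ring
        have q1 : a1 * (2 * (t-s)^(1/2:ℝ)) = 128 * 2^(1+2*β) * h^(2*β) * (t-s)^(-(1/2)-2*β) := by
          rw [ha1, p1, p2]; ring
        have q2 : a2 * ((t-s)^(1/2-2*β) / (1/2-2*β)) = 32 / (1/2-2*β) * h^(2*β) * (t-s)^(-(1/2)-2*β) := by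
          rw [ha2, p3, inv_div]; ring
        rw [q1, q2, K]; ring

end NK

theorem neumann_kernel_weighted_time_increment (β T : ℝ) (hβ0 : 0 < β) (hβ1 : β < 1 / 4)
    (hT : 0 < T) :
    ∃ C : ℝ, 0 < C ∧ ∀ s t t' x' y : ℝ, 0 ≤ s → s < min t t' → t ≤ T → t' ≤ T →
      x' ∈ Set.Icc (0 : ℝ) 1 → y ∈ Set.Icc (0 : ℝ) 1 →
      (∫ θ in s..(min t t'), ∫ r in (0 : ℝ)..1,
          (GN (t - θ) x' r - GN (t' - θ) x' r) ^ 2 * (heatKernel (θ - s) (y - r)) ^ 2) ≤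
        C * |t - t'| ^ (2 * β) * (min t t' - s) ^ (-(1/2) - 2 * β) := by
  refine ⟨NK.K β, ?_, ?_⟩
  · have : 0 < 1/2 - 2*β := by linarith
    unfold NK.K; positivity
  · intro s t t' x y _ hs _ _ _ _
    rcases le_total t t' with h | h
    · rw [min_eq_left h] at hs ⊢
      have := NK.main β s t (t' - t) x y hβ0 hβ1 hs (by linarith)
      rw [abs_sub_comm, abs_of_nonneg (by linarith : 0 ≤ t' - t)]
      simp_rw [fun θ => show t - θ + (t' - t) = t' - θ by ring] at this
      exact this
    · rw [min_eq_right h] at hs ⊢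
      have := NK.main β s t' (t - t') x y hβ0 hβ1 hs (by linarith)
      rw [abs_of_nonneg (by linarith : 0 ≤ t - t')]
      simp_rw [fun θ => show t' - θ + (t - t') = t - θ by ring] at this
      simp_rw [fun θ r => sub_sq_comm (GN (t - θ) x r) (GN (t' - θ) x r)]
      exact this
end

section
/- Let ρ ≥ 0. There exists a constant C > 0 (depending only on ρ) such that for all s, t with 0 ≤ s < t and all x, x̄ ∈ [0,1], ∫ₛᵗ ∫₀¹ (H_{t−θ}(x,r) − H_{t−θ}(x̄,r))² · (θ − s)^{−1/2} dr dθ ≤ C · |x − x̄|² / √(t − s). -/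
open Real MeasureTheory

/-- The Green's function of `-∂_x⁴ + ρ∂_x²` on `[0,1]` with Neumann boundary conditions:
`H_t(x,y) = 1 + 2 ∑_{k=1}^∞ e^{-(k⁴π⁴ + ρk²π²)t} cos(kπx) cos(kπy)`. -/
noncomputable def Hker (ρ t x y : ℝ) : ℝ :=
  1 + 2 * ∑' k : ℕ,
      Real.exp (-(((k + 1 : ℝ) ^ 4 * π ^ 4 + ρ * (k + 1 : ℝ) ^ 2 * π ^ 2) * t)) *
        Real.cos ((k + 1 : ℝ) * π * x) * Real.cos ((k + 1 : ℝ) * π * y)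

lemma aux_summable_sq : Summable (fun k : ℕ => 1 / ((k : ℝ) + 1) ^ 2) := by
  have h := (summable_nat_add_iff 1).2 (Real.summable_one_div_nat_pow.2 (by norm_num : 1 < 2))
  simpa using h

lemma aux_int_cos (n : ℤ) : ∫ r in (0 : ℝ)..1, Real.cos (n * π * r) = if n = 0 then 1 else 0 := by
  split_ifs with h
  · simp [h]
  · have hn : (n : ℝ) * π ≠ 0 := mul_ne_zero (by exact_mod_cast h) Real.pi_ne_zero
    rw [intervalIntegral.integral_comp_mul_left (f := Real.cos) hn]
    simp [Real.sin_int_mul_pi]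

lemma aux_orth (j k : ℕ) : ∫ r in (0 : ℝ)..1,
    Real.cos ((j + 1 : ℝ) * π * r) * Real.cos ((k + 1 : ℝ) * π * r) = if j = k then 1 / 2 else 0 := by
  have h1 : ∀ r : ℝ, Real.cos ((j + 1 : ℝ) * π * r) * Real.cos ((k + 1 : ℝ) * π * r) =
      (1/2) * Real.cos (((j - k : ℤ) : ℝ) * π * r) +
      (1/2) * Real.cos (((j + k + 2 : ℤ) : ℝ) * π * r) := by
    intro r
    have e1 : ((j - k : ℤ) : ℝ) * π * r = (j + 1 : ℝ) * π * r - (k + 1 : ℝ) * π * r := by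
      push_cast; ring
    have e2 : ((j + k + 2 : ℤ) : ℝ) * π * r = (j + 1 : ℝ) * π * r + (k + 1 : ℝ) * π * r := by
      push_cast; ring
    rw [e1, e2, Real.cos_sub, Real.cos_add]; ring
  simp_rw [h1]
  rw [intervalIntegral.integral_add (Continuous.intervalIntegrable (by fun_prop) _ _)
    (Continuous.intervalIntegrable (by fun_prop) _ _), intervalIntegral.integral_const_mul,
    intervalIntegral.integral_const_mul, aux_int_cos, aux_int_cos]
  have h2 : ¬ ((j : ℤ) + k + 2 = 0) := by omega
  rw [if_neg h2]
  by_cases h : j = k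
  · simp [h]
  · have : ¬ ((j : ℤ) - k = 0) := by omega
    rw [if_neg this, if_neg h]; simp

lemma aux_sum (c : ℕ → ℝ) (hc : Summable (fun k => |c k|)) (r : ℝ) :
    Summable (fun k : ℕ => c k * Real.cos ((k + 1 : ℝ) * π * r)) := by
  refine Summable.of_norm_bounded hc (fun k => ?_)
  rw [Real.norm_eq_abs, abs_mul]
  exact mul_le_of_le_one_right (abs_nonneg _) (Real.abs_cos_le_one _)

lemma aux_cont (c : ℕ → ℝ) (hc : Summable (fun k => |c k|)) :
    Continuous (fun r : ℝ => ∑' k : ℕ, c k * Real.cos ((k + 1 : ℝ) * π * r)) := by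
  refine continuous_tsum (fun k => by fun_prop) hc (fun k r => ?_)
  rw [Real.norm_eq_abs, abs_mul]
  exact mul_le_of_le_one_right (abs_nonneg _) (Real.abs_cos_le_one _)

/-- integrate a cosine series against a continuous function -/
lemma aux_swap (c : ℕ → ℝ) (hc : Summable (fun k => |c k|)) (g : ℝ → ℝ) (hg : Continuous g) :
    HasSum (fun k : ℕ => c k * ∫ r in (0 : ℝ)..1, Real.cos ((k + 1 : ℝ) * π * r) * g r)
      (∫ r in (0 : ℝ)..1, (∑' k : ℕ, c k * Real.cos ((k + 1 : ℝ) * π * r)) * g r) := by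
  have := intervalIntegral.hasSum_integral_of_dominated_convergence (a := 0) (b := 1)
    (μ := volume)
    (F := fun (k : ℕ) (r : ℝ) => c k * (Real.cos ((k + 1 : ℝ) * π * r) * g r))
    (f := fun r => (∑' k : ℕ, c k * Real.cos ((k + 1 : ℝ) * π * r)) * g r)
    (fun k r => |c k| * |g r|)
    (fun k => (Continuous.aestronglyMeasurable (by fun_prop)))
    (fun k => Filter.Eventually.of_forall fun r _ => by
      rw [Real.norm_eq_abs, abs_mul, abs_mul]
      exact mul_le_mul_of_nonneg_left
        (mul_le_of_le_one_left (abs_nonneg _) (Real.abs_cos_le_one _)) (abs_nonneg _))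
    (Filter.Eventually.of_forall fun r _ => hc.mul_right _)
    (by
      simp_rw [tsum_mul_right]
      exact Continuous.intervalIntegrable (by fun_prop) _ _)
    (Filter.Eventually.of_forall fun r _ => by
      have := (aux_sum c hc r).hasSum.mul_right (g r)
      simpa [mul_assoc] using this)
  simpa [intervalIntegral.integral_const_mul] using this

lemma aux_parseval (c : ℕ → ℝ) (hc : Summable (fun k => |c k|)) :
    HasSum (fun k : ℕ => c k ^ 2 / 2)
      (∫ r in (0 : ℝ)..1, (∑' k : ℕ, c k * Real.cos ((k + 1 : ℝ) * π * r)) ^ 2) := by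
  have h := aux_swap c hc _ (aux_cont c hc)
  simp_rw [← sq] at h
  convert h using 2 with k
  have h2 := aux_swap c hc (fun r => Real.cos ((k + 1 : ℝ) * π * r)) (by fun_prop)
  simp_rw [aux_orth] at h2
  have h3 := hasSum_ite_eq k (c k * (1/2))
  have h4 : (fun j : ℕ => c j * (if j = k then (1/2 : ℝ) else 0)) =
      fun j => if j = k then c k * (1/2) else 0 := by
    funext j; split_ifs with h
    · rw [h]
    · simp
  rw [h4] at h2
  have h5 := h2.unique h3
  simp_rw [mul_comm (Real.cos _)]
  rw [h5]; ring

lemma aux_exp (u : ℝ) (hu : 0 < u) : Real.exp (-u) ≤ 1 / u := by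
  rw [Real.exp_neg, ← one_div]
  exact one_div_le_one_div_of_le hu (by linarith [Real.add_one_le_exp u])

lemma aux_rpow_int (s t : ℝ) (h : s < t) :
    IntervalIntegrable (fun θ : ℝ => (θ - s) ^ (-(1/2) : ℝ)) volume s t ∧
    ∫ θ in s..t, (θ - s) ^ (-(1/2) : ℝ) = 2 * Real.sqrt (t - s) := by
  constructor
  · have := (intervalIntegral.intervalIntegrable_rpow' (a := 0) (b := t - s) (r := (-(1/2) : ℝ))
      (by norm_num)).comp_sub_right s
    simpa using this
  · rw [intervalIntegral.integral_comp_sub_right (fun θ : ℝ => θ ^ (-(1/2) : ℝ)) s,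
      integral_rpow (Or.inl (by norm_num)), Real.sqrt_eq_rpow]
    norm_num
    ring

lemma aux_exp_int (a s t : ℝ) (ha : 0 < a) :
    ∫ θ in s..t, Real.exp (-(a * (t - θ))) ≤ 1 / a := by
  have hd : ∀ θ ∈ Set.uIcc s t, HasDerivAt (fun θ => Real.exp (-(a * (t - θ))) / a)
      (Real.exp (-(a * (t - θ)))) θ := by
    intro θ _
    have h1 : HasDerivAt (fun θ : ℝ => -(a * (t - θ))) a θ := by
      have h0 := (((hasDerivAt_id θ).const_sub t).const_mul a).neg
      have h2 : -(a * -1) = a := by ring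
      rw [h2] at h0
      exact h0
    have := h1.exp.div_const a
    rwa [mul_div_cancel_right₀ _ ha.ne'] at this
  rw [intervalIntegral.integral_eq_sub_of_hasDerivAt hd
    (Continuous.intervalIntegrable (by fun_prop) _ _)]
  have : 0 ≤ Real.exp (-(a * (t - s))) / a := by positivity
  simp only [sub_self, mul_zero, neg_zero, Real.exp_zero]
  linarith

lemma aux_mode_integrable (a s t : ℝ) (h : s < t) :
    IntervalIntegrable (fun θ => Real.exp (-(a * (t - θ))) * (θ - s) ^ (-(1/2) : ℝ)) volume s t :=
  (aux_rpow_int s t h).1.continuousOn_mul (Continuous.continuousOn (by fun_prop))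

lemma aux_mode (a s t : ℝ) (ha : 0 < a) (h : s < t) :
    ∫ θ in s..t, Real.exp (-(a * (t - θ))) * (θ - s) ^ (-(1/2) : ℝ) ≤
      6 / (a * Real.sqrt (t - s)) := by
  set T := t - s with hT
  have hT0 : 0 < T := sub_pos.2 h
  have hi1 : IntervalIntegrable (fun θ => Real.exp (-(a * (t - θ))) * (T/2) ^ (-(1/2) : ℝ))
    volume s t := Continuous.intervalIntegrable (by fun_prop) _ _
  have hi2 : IntervalIntegrable (fun θ => (2 / (a * T)) * (θ - s) ^ (-(1/2) : ℝ))
    volume s t := (aux_rpow_int s t h).1.const_mul _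
  have hb : ∫ θ in s..t, Real.exp (-(a * (t - θ))) * (θ - s) ^ (-(1/2) : ℝ) ≤
      ∫ θ in s..t, (Real.exp (-(a * (t - θ))) * (T/2) ^ (-(1/2) : ℝ) +
        (2 / (a * T)) * (θ - s) ^ (-(1/2) : ℝ)) := by
    refine intervalIntegral.integral_mono_on h.le (aux_mode_integrable a s t h) (hi1.add hi2) ?_
    intro θ hθ
    have hθ0 : 0 ≤ (θ - s) ^ (-(1/2) : ℝ) := Real.rpow_nonneg (by linarith [hθ.1]) _
    rcases le_total (T/2) (θ - s) with hc | hc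
    · have h1 : (θ - s) ^ (-(1/2) : ℝ) ≤ (T/2) ^ (-(1/2) : ℝ) :=
        Real.rpow_le_rpow_of_nonpos (by positivity) hc (by norm_num)
      have h2 := mul_le_mul_of_nonneg_left h1 (Real.exp_pos (-(a * (t - θ)))).le
      have h3 : 0 ≤ (2 / (a * T)) * (θ - s) ^ (-(1/2) : ℝ) := by positivity
      linarith
    · have h1 : Real.exp (-(a * (t - θ))) ≤ 2 / (a * T) := by
        calc Real.exp (-(a * (t - θ))) ≤ Real.exp (-(a * (T / 2))) := by
              apply Real.exp_le_exp.2
              have : a * (T/2) ≤ a * (t - θ) := mul_le_mul_of_nonneg_left (by linarith) ha.le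
              linarith
          _ ≤ 1 / (a * (T/2)) := aux_exp _ (by positivity)
          _ = 2 / (a * T) := by field_simp
      have h2 := mul_le_mul_of_nonneg_right h1 hθ0
      have h3 : 0 ≤ Real.exp (-(a * (t - θ))) * (T/2) ^ (-(1/2) : ℝ) := by positivity
      linarith
  refine hb.trans ?_
  rw [intervalIntegral.integral_add hi1 hi2, intervalIntegral.integral_mul_const,
    intervalIntegral.integral_const_mul, (aux_rpow_int s t h).2, ← hT]
  have e1 := aux_exp_int a s t ha
  have e2 : (T/2) ^ (-(1/2) : ℝ) ≤ 2 / Real.sqrt T := by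
    rw [Real.rpow_neg (by positivity), ← Real.sqrt_eq_rpow, ← one_div,
      div_le_div_iff₀ (by positivity) (by positivity), one_mul]
    rw [show (2 : ℝ) * √(T/2) = √(4 * (T/2)) by
      rw [Real.sqrt_mul (by norm_num), show (4:ℝ) = 2^2 by norm_num, Real.sqrt_sq (by norm_num)]]
    exact Real.sqrt_le_sqrt (by linarith)
  have e3 : (∫ θ in s..t, Real.exp (-(a * (t - θ)))) * (T/2) ^ (-(1/2) : ℝ) ≤
      (1 / a) * (2 / Real.sqrt T) := mul_le_mul e1 e2 (by positivity) (by positivity)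
  have hs : 0 < Real.sqrt T := Real.sqrt_pos.2 hT0
  have e4 : 2 / (a * T) * (2 * Real.sqrt T) = 4 / (a * Real.sqrt T) := by
    have : T = Real.sqrt T * Real.sqrt T := (Real.mul_self_sqrt hT0.le).symm
    rw [div_mul_eq_mul_div, div_eq_div_iff (by positivity) (by positivity)]
    nlinarith
  rw [e4]
  have e5 : (1 / a) * (2 / Real.sqrt T) + 4 / (a * Real.sqrt T) = 6 / (a * Real.sqrt T) := by
    field_simp; norm_num
  linarith

/-- the eigenvalues -/
noncomputable def auxL (ρ : ℝ) (k : ℕ) : ℝ :=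
  (k + 1 : ℝ) ^ 4 * π ^ 4 + ρ * (k + 1 : ℝ) ^ 2 * π ^ 2

lemma auxL_ge (ρ : ℝ) (hρ : 0 ≤ ρ) (k : ℕ) : ((k : ℝ) + 1) ^ 4 * π ^ 2 ≤ auxL ρ k := by
  unfold auxL
  have h1 : π ^ 2 ≤ π ^ 4 := pow_le_pow_right₀ (by linarith [Real.pi_gt_three]) (by norm_num)
  have h2 : 0 ≤ ρ * (k + 1 : ℝ) ^ 2 * π ^ 2 := by positivity
  have := mul_le_mul_of_nonneg_left h1 (by positivity : 0 ≤ ((k : ℝ) + 1) ^ 4)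
  linarith

lemma auxL_ge' (ρ : ℝ) (hρ : 0 ≤ ρ) (k : ℕ) : ((k : ℝ) + 1) ^ 2 ≤ auxL ρ k := by
  refine le_trans ?_ (auxL_ge ρ hρ k)
  have h1 : 1 ≤ π ^ 2 := one_le_pow₀ (by linarith [Real.pi_gt_three])
  have h2 : ((k : ℝ) + 1) ^ 2 ≤ ((k : ℝ) + 1) ^ 4 :=
    pow_le_pow_right₀ (by linarith [(Nat.cast_nonneg k : (0:ℝ) ≤ k)]) (by norm_num)
  exact h2.trans (le_mul_of_one_le_right (by positivity) h1)

lemma auxL_summable (ρ τ : ℝ) (hρ : 0 ≤ ρ) (hτ : 0 < τ) :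
    Summable (fun k : ℕ => Real.exp (-(auxL ρ k * τ))) := by
  refine Summable.of_nonneg_of_le (fun k => (Real.exp_pos _).le) (fun k => ?_)
    (aux_summable_sq.mul_right (1 / τ))
  have h0 := auxL_ge' ρ hρ k
  have hp : 0 < ((k : ℝ) + 1) ^ 2 := by positivity
  refine (aux_exp _ (mul_pos (hp.trans_le h0) hτ)).trans ?_
  rw [← one_div_mul_one_div]
  exact mul_le_mul_of_nonneg_right (one_div_le_one_div_of_le hp h0) (by positivity)

lemma aux_inner (ρ τ x x' : ℝ) (hρ : 0 ≤ ρ) (hτ : 0 < τ) :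
    HasSum (fun k : ℕ => 2 * (Real.cos ((k + 1 : ℝ) * π * x) - Real.cos ((k + 1 : ℝ) * π * x')) ^ 2
        * Real.exp (-((2 * auxL ρ k) * τ)))
      (∫ r in (0 : ℝ)..1, (Hker ρ τ x r - Hker ρ τ x' r) ^ 2) := by
  have hS := auxL_summable ρ τ hρ hτ
  have hS' : ∀ x : ℝ, Summable (fun k : ℕ =>
      |Real.exp (-(auxL ρ k * τ)) * Real.cos ((k + 1 : ℝ) * π * x)|) := by
    intro x
    refine Summable.of_nonneg_of_le (fun _ => abs_nonneg _) (fun k => ?_) hS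
    rw [abs_mul, abs_of_pos (Real.exp_pos _)]
    exact mul_le_of_le_one_right (Real.exp_pos _).le (Real.abs_cos_le_one _)
  set c : ℕ → ℝ := fun k => Real.exp (-(auxL ρ k * τ)) * Real.cos ((k + 1 : ℝ) * π * x) -
    Real.exp (-(auxL ρ k * τ)) * Real.cos ((k + 1 : ℝ) * π * x') with hcdef
  have hc : Summable (fun k => |c k|) :=
    Summable.of_nonneg_of_le (fun _ => abs_nonneg _) (fun k => abs_sub _ _)
      ((hS' x).add (hS' x'))
  have hP := (aux_parseval c hc).mul_left 4
  rw [← intervalIntegral.integral_const_mul] at hP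
  have key : ∀ {f g : ℕ → ℝ} {a b : ℝ}, HasSum g b → f = g → a = b → HasSum f a := by
    intro f g a b h h1 h2
    rw [h1, h2]; exact h
  refine key hP ?_ ?_
  · funext k
    have : Real.exp (-((2 * auxL ρ k) * τ)) = Real.exp (-(auxL ρ k * τ)) ^ 2 := by
      rw [← Real.exp_nat_mul]; congr 1; push_cast; ring
    rw [this, hcdef]; ring
  · congr 1
    funext r
    have : Hker ρ τ x r - Hker ρ τ x' r =
        2 * ∑' k : ℕ, c k * Real.cos ((k + 1 : ℝ) * π * r) := by
      simp only [hcdef, sub_mul]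
      rw [(aux_sum _ (hS' x) r).tsum_sub (aux_sum _ (hS' x') r)]
      unfold Hker auxL
      ring
    rw [this]; ring

theorem fourth_order_kernel_weighted_space_increment (ρ : ℝ) (hρ : 0 ≤ ρ) :
    ∃ C : ℝ, 0 < C ∧ ∀ s t x x' : ℝ, 0 ≤ s → s < t →
      x ∈ Set.Icc (0 : ℝ) 1 → x' ∈ Set.Icc (0 : ℝ) 1 →
      (∫ θ in s..t, ∫ r in (0 : ℝ)..1,
          (Hker ρ (t - θ) x r - Hker ρ (t - θ) x' r) ^ 2 * (θ - s) ^ (-(1/2) : ℝ)) ≤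
        C * |x - x'| ^ 2 / Real.sqrt (t - s) := by
  refine ⟨6 * ∑' k : ℕ, 1 / ((k : ℝ) + 1) ^ 2, ?_, ?_⟩
  · exact mul_pos (by norm_num) (aux_summable_sq.tsum_pos (fun k => by positivity) 0 (by norm_num))
  intro s t x x' _ hst _ _
  set d : ℕ → ℝ := fun k => Real.cos ((k + 1 : ℝ) * π * x) - Real.cos ((k + 1 : ℝ) * π * x')
    with hd
  have hT : 0 < Real.sqrt (t - s) := Real.sqrt_pos.2 (sub_pos.2 hst)
  have hdb : ∀ k, d k ^ 2 ≤ (((k : ℝ) + 1) * π) ^ 2 * |x - x'| ^ 2 := by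
    intro k
    have h1 : |d k| ≤ |((k : ℝ) + 1) * π * x - ((k : ℝ) + 1) * π * x'| :=
      Real.abs_cos_sub_cos_le _ _
    rw [← mul_sub, abs_mul, abs_of_pos (by positivity : 0 < ((k : ℝ) + 1) * π)] at h1
    rw [← sq_abs, ← mul_pow]
    exact pow_le_pow_left₀ (abs_nonneg _) h1 2
  set F : ℕ → ℝ → ℝ := fun k θ => 2 * d k ^ 2 *
    (Real.exp (-((2 * auxL ρ k) * (t - θ))) * (θ - s) ^ (-(1/2) : ℝ)) with hF
  have hLpos : ∀ k, 0 < auxL ρ k := fun k =>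
    lt_of_lt_of_le (by positivity) (auxL_ge' ρ hρ k)
  have hFi : ∀ k, Integrable (F k) (volume.restrict (Set.Ioc s t)) := fun k =>
    ((intervalIntegrable_iff_integrableOn_Ioc_of_le hst.le).1
      ((aux_mode_integrable (2 * auxL ρ k) s t hst).const_mul (2 * d k ^ 2)))
  have hFb : ∀ k, ∫ θ in Set.Ioc s t, F k θ ≤
      6 * (1 / ((k : ℝ) + 1) ^ 2) * (|x - x'| ^ 2 / Real.sqrt (t - s)) := by
    intro k
    rw [← intervalIntegral.integral_of_le hst.le]
    simp only [hF]
    rw [intervalIntegral.integral_const_mul]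
    have h1 := aux_mode (2 * auxL ρ k) s t (by linarith [hLpos k]) hst
    have hL := auxL_ge ρ hρ k
    calc _ ≤ 2 * ((((k : ℝ) + 1) * π) ^ 2 * |x - x'| ^ 2) *
            (6 / (2 * (((k : ℝ) + 1) ^ 4 * π ^ 2) * Real.sqrt (t - s))) := by
          refine mul_le_mul (by linarith [hdb k]) (h1.trans ?_) ?_ (by positivity)
          · gcongr
          · refine intervalIntegral.integral_nonneg hst.le fun θ hθ => ?_
            exact mul_nonneg (Real.exp_pos _).le (Real.rpow_nonneg (by linarith [hθ.1]) _)
      _ = _ := by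
          field_simp
  have hFnn : ∀ k, ∫ θ in Set.Ioc s t, ‖F k θ‖ = ∫ θ in Set.Ioc s t, F k θ := by
    intro k
    refine setIntegral_congr_fun measurableSet_Ioc fun θ hθ => ?_
    simp only [hF]
    rw [Real.norm_of_nonneg]
    exact mul_nonneg (by positivity)
      (mul_nonneg (Real.exp_pos _).le (Real.rpow_nonneg (by linarith [hθ.1]) _))
  have hbS : Summable (fun k : ℕ =>
      6 * (1 / ((k : ℝ) + 1) ^ 2) * (|x - x'| ^ 2 / Real.sqrt (t - s))) :=
    (aux_summable_sq.mul_left 6).mul_right _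
  have hsum : Summable (fun k => ∫ θ in Set.Ioc s t, ‖F k θ‖) := by
    refine Summable.of_nonneg_of_le (fun k => integral_nonneg fun _ => norm_nonneg _)
      (fun k => ?_) hbS
    rw [hFnn k]; exact hFb k
  have hmain := hasSum_integral_of_summable_integral_norm hFi hsum
  have heq : (∫ θ in s..t, ∫ r in (0 : ℝ)..1,
          (Hker ρ (t - θ) x r - Hker ρ (t - θ) x' r) ^ 2 * (θ - s) ^ (-(1/2) : ℝ)) =
      ∫ θ in Set.Ioc s t, ∑' k, F k θ := by
    rw [intervalIntegral.integral_of_le hst.le, integral_Ioc_eq_integral_Ioo,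
      integral_Ioc_eq_integral_Ioo]
    refine setIntegral_congr_fun measurableSet_Ioo fun θ hθ => ?_
    simp only [intervalIntegral.integral_mul_const]
    rw [← ((aux_inner ρ (t - θ) x x' hρ (sub_pos.2 hθ.2)).mul_right
      ((θ - s) ^ (-(1/2) : ℝ))).tsum_eq]
    simp only [hF, hd, mul_assoc]
  rw [heq, ← hmain.tsum_eq]
  calc _ ≤ ∑' k : ℕ, 6 * (1 / ((k : ℝ) + 1) ^ 2) * (|x - x'| ^ 2 / Real.sqrt (t - s)) :=
        hmain.summable.tsum_le_tsum hFb hbS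
    _ = _ := by
        rw [tsum_mul_right, tsum_mul_left]; ring
end

section
/- Let ρ ≥ 0 and let α ∈ (0, 3/4). There exists a constant C > 0 (depending only on ρ and α) such that for all s, t, t̄ with 0 ≤ s < t ≤ t̄ and all x ∈ [0,1], ∫ₛᵗ ∫₀¹ (H_{t−θ}(x,r) − H_{t̄−θ}(x,r))² · (θ − s)^{−1/2} dr dθ ≤ C · |t − t̄|^{α} / √(t − s). -/
open Real MeasureTheory

noncomputable def lamH (ρ : ℝ) (k : ℕ) : ℝ :=
  (k + 1 : ℝ) ^ 4 * π ^ 4 + ρ * (k + 1 : ℝ) ^ 2 * π ^ 2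

lemma lamH_ge (ρ : ℝ) (hρ : 0 ≤ ρ) (k : ℕ) : (k + 1 : ℝ) ^ 4 ≤ lamH ρ k := by
  unfold lamH
  have h1 : (1 : ℝ) ≤ π ^ 4 := one_le_pow₀ (by linarith [Real.pi_gt_three])
  have h2 : 0 ≤ ρ * (k + 1 : ℝ) ^ 2 * π ^ 2 := by positivity
  have h3 : (0 : ℝ) ≤ (k + 1 : ℝ) ^ 4 := by positivity
  nlinarith

lemma lamH_one (ρ : ℝ) (hρ : 0 ≤ ρ) (k : ℕ) : 1 ≤ lamH ρ k := by
  refine le_trans ?_ (lamH_ge ρ hρ k)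
  exact one_le_pow₀ (by linarith [(Nat.cast_nonneg k : (0 : ℝ) ≤ k)])

lemma lamH_summable (ρ : ℝ) (hρ : 0 ≤ ρ) (α : ℝ) (hα1 : α < 3 / 4) :
    Summable (fun k => lamH ρ k ^ (α - 1)) := by
  have h : Summable (fun k : ℕ => ((k + 1 : ℕ) : ℝ) ^ (4 * (α - 1))) :=
    (summable_nat_add_iff 1).2 (Real.summable_nat_rpow.2 (by linarith))
  refine Summable.of_nonneg_of_le (fun k => ?_) (fun k => ?_) h
  · exact Real.rpow_nonneg (by linarith [lamH_one ρ hρ k]) _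
  · have h0 : (0 : ℝ) < k + 1 := by positivity
    have : ((k + 1 : ℕ) : ℝ) ^ (4 * (α - 1)) = ((k + 1 : ℝ) ^ 4) ^ (α - 1) := by
      rw [Real.rpow_mul (by positivity)]
      push_cast
      congr 1
      exact_mod_cast Real.rpow_natCast (k + 1 : ℝ) 4
    rw [this]
    exact Real.rpow_le_rpow_of_nonpos (by positivity) (lamH_ge ρ hρ k) (by linarith)

lemma exp_le_inv_mul {u : ℝ} (hu : 0 < u) : Real.exp (-u) ≤ 1 / u := by
  rw [Real.exp_neg, ← one_div]
  exact one_div_le_one_div_of_le hu (by linarith [Real.add_one_le_exp u])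

lemma sum_a (ρ : ℝ) (hρ : 0 ≤ ρ) (α : ℝ) (hα1 : α < 3 / 4) (τ : ℝ) (hτ : 0 < τ) :
    Summable (fun k => lamH ρ k ^ α * Real.exp (-(lamH ρ k * τ))) := by
  refine Summable.of_nonneg_of_le (fun k => ?_) (fun k => ?_)
    ((lamH_summable ρ hρ α hα1).mul_right (1 / τ))
  · have := lamH_one ρ hρ k
    positivity
  · have h1 := lamH_one ρ hρ k
    have h0 : 0 < lamH ρ k := by linarith
    have := exp_le_inv_mul (mul_pos h0 hτ)
    rw [Real.rpow_sub_one h0.ne']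
    calc _ ≤ lamH ρ k ^ α * (1 / (lamH ρ k * τ)) := by gcongr
      _ = _ := by field_simp

lemma sum_b (ρ : ℝ) (hρ : 0 ≤ ρ) (τ : ℝ) (hτ : 0 < τ) :
    Summable (fun k => Real.exp (-(lamH ρ k * τ))) := by
  simpa using sum_a ρ hρ 0 (by norm_num) τ hτ

lemma int_cos_int (n : ℤ) (hn : n ≠ 0) : ∫ r in (0:ℝ)..1, Real.cos ((n * π) * r) = 0 := by
  have h : (n : ℝ) * π ≠ 0 := mul_ne_zero (by exact_mod_cast hn) Real.pi_ne_zero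
  rw [intervalIntegral.integral_comp_mul_left (fun x => Real.cos x) h, integral_cos]
  simp [Real.sin_int_mul_pi]

lemma int_cos_cos (j k : ℕ) (hjk : j ≠ k) :
    ∫ r in (0:ℝ)..1, Real.cos ((j + 1 : ℝ) * π * r) * Real.cos ((k + 1 : ℝ) * π * r) = 0 := by
  have e : ∀ r : ℝ, Real.cos ((j + 1 : ℝ) * π * r) * Real.cos ((k + 1 : ℝ) * π * r)
      = (1/2) * Real.cos ((((j:ℤ) - (k:ℤ) : ℤ) * π) * r)
        + (1/2) * Real.cos ((((j:ℤ) + (k:ℤ) + 2 : ℤ) * π) * r) := by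
    intro r
    push_cast
    have h1 : ((j:ℝ) - k) * π * r = (j + 1 : ℝ) * π * r - (k + 1 : ℝ) * π * r := by ring
    have h2 : ((j:ℝ) + k + 2) * π * r = (j + 1 : ℝ) * π * r + (k + 1 : ℝ) * π * r := by ring
    rw [h1, h2, Real.cos_sub, Real.cos_add]
    ring
  simp_rw [e]
  rw [intervalIntegral.integral_add (Continuous.intervalIntegrable (by fun_prop) _ _)
    (Continuous.intervalIntegrable (by fun_prop) _ _),
    intervalIntegral.integral_const_mul, intervalIntegral.integral_const_mul,
    int_cos_int _ (by omega), int_cos_int _ (by omega)]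
  simp

lemma int_cos_sq (k : ℕ) :
    ∫ r in (0:ℝ)..1, Real.cos ((k + 1 : ℝ) * π * r) * Real.cos ((k + 1 : ℝ) * π * r) ≤ 1 := by
  calc _ ≤ ∫ r in (0:ℝ)..1, (1 : ℝ) := by
        apply intervalIntegral.integral_mono (by norm_num)
          (Continuous.intervalIntegrable (by fun_prop) _ _)
          (Continuous.intervalIntegrable (by fun_prop) _ _)
        intro r
        have := Real.cos_sq_le_one ((k + 1 : ℝ) * π * r)
        simpa [sq] using this
    _ = 1 := by simp

lemma partial_bound (c : ℕ → ℝ) (n : ℕ) :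
    ∫ r in (0:ℝ)..1, (∑ k ∈ Finset.range n, c k * Real.cos ((k + 1 : ℝ) * π * r)) ^ 2
      ≤ ∑ k ∈ Finset.range n, c k ^ 2 := by
  have e : ∀ r : ℝ, (∑ k ∈ Finset.range n, c k * Real.cos ((k + 1 : ℝ) * π * r)) ^ 2
      = ∑ j ∈ Finset.range n, ∑ k ∈ Finset.range n, (c j * c k) *
        (Real.cos ((j + 1 : ℝ) * π * r) * Real.cos ((k + 1 : ℝ) * π * r)) := by
    intro r
    rw [sq, Finset.sum_mul_sum]
    refine Finset.sum_congr rfl fun j _ => Finset.sum_congr rfl fun k _ => by ring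
  simp_rw [e]
  rw [intervalIntegral.integral_finsetSum
    (fun j _ => Continuous.intervalIntegrable (by fun_prop) _ _)]
  refine Finset.sum_le_sum fun j hj => ?_
  rw [intervalIntegral.integral_finsetSum
    (fun j _ => Continuous.intervalIntegrable (by fun_prop) _ _)]
  rw [Finset.sum_eq_single_of_mem j hj]
  · rw [intervalIntegral.integral_const_mul]
    have := int_cos_sq j
    nlinarith [sq_nonneg (c j)]
  · intro k _ hk
    rw [intervalIntegral.integral_const_mul, int_cos_cos j k hk.symm, mul_zero]

lemma abs_term_le (c : ℕ → ℝ) (r : ℝ) (k : ℕ) :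
    ‖c k * Real.cos ((k + 1 : ℝ) * π * r)‖ ≤ |c k| := by
  rw [norm_mul]
  exact mul_le_of_le_one_right (abs_nonneg _) (Real.abs_cos_le_one _)

lemma bessel (c : ℕ → ℝ) (hc : Summable fun k => |c k|) (B : ℝ)
    (hB : ∀ n, ∑ k ∈ Finset.range n, c k ^ 2 ≤ B) :
    ∫ r in (0:ℝ)..1, (∑' k, c k * Real.cos ((k + 1 : ℝ) * π * r)) ^ 2 ≤ B := by
  have hs : ∀ r : ℝ, Summable fun k : ℕ => c k * Real.cos ((k + 1 : ℝ) * π * r) := fun r =>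
    Summable.of_norm_bounded hc (abs_term_le c r)
  have ht : Filter.Tendsto (fun n : ℕ => ∫ r in (0:ℝ)..1,
      (∑ k ∈ Finset.range n, c k * Real.cos ((k + 1 : ℝ) * π * r)) ^ 2) Filter.atTop
      (nhds (∫ r in (0:ℝ)..1, (∑' k, c k * Real.cos ((k + 1 : ℝ) * π * r)) ^ 2)) := by
    apply intervalIntegral.tendsto_integral_filter_of_dominated_convergence
      (fun _ => (∑' k, |c k|) ^ 2)
    · exact Filter.Eventually.of_forall fun n =>
        (Continuous.aestronglyMeasurable (by fun_prop))
    · refine Filter.Eventually.of_forall fun n => Filter.Eventually.of_forall fun r _ => ?_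
      rw [norm_pow]
      refine pow_le_pow_left₀ (norm_nonneg _) ?_ 2
      refine (norm_sum_le _ _).trans ?_
      refine (Finset.sum_le_sum fun k _ => abs_term_le c r k).trans ?_
      exact hc.sum_le_tsum _ (fun _ _ => abs_nonneg _)
    · exact intervalIntegrable_const
    · exact Filter.Eventually.of_forall fun r _ => ((hs r).hasSum.tendsto_sum_nat).pow 2
  exact le_of_tendsto' ht fun n => (partial_bound c n).trans (hB n)

lemma diff_bound (l τ h α : ℝ) (hl : 1 ≤ l) (hτ : 0 < τ) (hh : 0 ≤ h) (hα0 : 0 < α)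
    (hα1 : α < 3 / 4) :
    (Real.exp (-(l * τ)) - Real.exp (-(l * (τ + h)))) ^ 2
      ≤ h ^ α * (l ^ α * Real.exp (-(l * τ))) := by
  have e : Real.exp (-(l * (τ + h))) = Real.exp (-(l * τ)) * Real.exp (-(l * h)) := by
    rw [← Real.exp_add]; ring_nf
  have hlh : 0 ≤ l * h := by positivity
  have h1 : Real.exp (-(l * τ)) ≤ 1 := Real.exp_le_one_iff.2 (by nlinarith)
  have h2 : Real.exp (-(l * h)) ≤ 1 := Real.exp_le_one_iff.2 (by linarith)
  have h3 : 1 - Real.exp (-(l * h)) ≤ l * h := by linarith [Real.add_one_le_exp (-(l * h))]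
  have p1 := Real.exp_pos (-(l * τ))
  have p2 := Real.exp_pos (-(l * h))
  have key : (1 - Real.exp (-(l * h))) ≤ (l * h) ^ α := by
    rcases le_total (l * h) 1 with hc | hc
    · refine h3.trans ?_
      exact Real.self_le_rpow_of_le_one hlh hc (by linarith)
    · have := Real.one_le_rpow hc hα0.le
      linarith
  rw [e, show h ^ α * (l ^ α * Real.exp (-(l * τ))) = Real.exp (-(l * τ)) * (l * h) ^ α by
    rw [Real.mul_rpow (by linarith) hh]; ring]
  have q : (Real.exp (-(l * τ)) - Real.exp (-(l * τ)) * Real.exp (-(l * h))) ^ 2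
    = (Real.exp (-(l * τ)) * Real.exp (-(l * τ))) *
      ((1 - Real.exp (-(l * h))) * (1 - Real.exp (-(l * h)))) := by ring
  rw [q]
  refine mul_le_mul (by nlinarith) (le_trans ?_ key) (mul_self_nonneg _) p1.le
  nlinarith

lemma inner_bound (ρ : ℝ) (hρ : 0 ≤ ρ) (α : ℝ) (hα0 : 0 < α) (hα1 : α < 3 / 4)
    (τ h x : ℝ) (hτ : 0 < τ) (hh : 0 ≤ h) :
    ∫ r in (0:ℝ)..1, (Hker ρ τ x r - Hker ρ (τ + h) x r) ^ 2
      ≤ ∑' k, 4 * (h ^ α * (lamH ρ k ^ α * Real.exp (-(lamH ρ k * τ)))) := by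
  set c : ℕ → ℝ := fun k => 2 * (Real.exp (-(lamH ρ k * τ)) - Real.exp (-(lamH ρ k * (τ + h)))) *
    Real.cos ((k + 1 : ℝ) * π * x) with hc
  have cosb : ∀ y : ℝ, ∀ u : ℝ, |u * Real.cos y| ≤ |u| := fun y u => by
    rw [abs_mul]
    exact mul_le_of_le_one_right (abs_nonneg _) (Real.abs_cos_le_one _)
  have s1 := sum_b ρ hρ τ hτ
  have s2 := sum_b ρ hρ (τ + h) (by linarith)
  have hcs : Summable fun k => |c k| := by
    refine Summable.of_nonneg_of_le (fun k => abs_nonneg _) (fun k => ?_)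
      ((s1.add s2).mul_left 2)
    refine (cosb _ _).trans ?_
    rw [abs_mul, abs_two]
    gcongr
    refine (abs_sub _ _).trans ?_
    rw [abs_of_pos (Real.exp_pos _), abs_of_pos (Real.exp_pos _)]
  have sH : ∀ σ : ℝ, 0 < σ → ∀ r : ℝ, Summable fun k : ℕ => Real.exp (-(lamH ρ k * σ)) *
        Real.cos ((k + 1 : ℝ) * π * x) * Real.cos ((k + 1 : ℝ) * π * r) := fun σ hσ r => by
    refine Summable.of_norm_bounded (sum_b ρ hρ σ hσ) fun k => ?_
    refine (cosb _ _).trans ((cosb _ _).trans ?_)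
    rw [abs_of_pos (Real.exp_pos _)]
  have e : ∀ r : ℝ, Hker ρ τ x r - Hker ρ (τ + h) x r
      = ∑' k, c k * Real.cos ((k + 1 : ℝ) * π * r) := fun r => by
    have h1 : ∀ σ, Hker ρ σ x r = 1 + 2 * ∑' k : ℕ, Real.exp (-(lamH ρ k * σ)) *
        Real.cos ((k + 1 : ℝ) * π * x) * Real.cos ((k + 1 : ℝ) * π * r) := fun σ => rfl
    rw [h1, h1, add_sub_add_left_eq_sub, ← mul_sub,
      ← (sH τ hτ r).tsum_sub (sH (τ + h) (by linarith) r), ← tsum_mul_left]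
    refine tsum_congr fun k => ?_
    simp only [hc]
    ring
  simp_rw [e]
  apply bessel c hcs
  intro n
  have ss := ((sum_a ρ hρ α hα1 τ hτ).mul_left (h ^ α)).mul_left 4
  refine le_trans (Finset.sum_le_sum fun k _ => ?_) (ss.sum_le_tsum (Finset.range n) ?_)
  · have b := diff_bound (lamH ρ k) τ h α (lamH_one ρ hρ k) hτ hh hα0 hα1
    have := Real.cos_sq_le_one ((k + 1 : ℝ) * π * x)
    simp only [hc]
    rw [mul_pow, mul_pow]
    calc _ ≤ 2 ^ 2 * (Real.exp (-(lamH ρ k * τ)) - Real.exp (-(lamH ρ k * (τ + h)))) ^ 2 * 1 := by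
          gcongr
      _ ≤ _ := by linarith
  · intro k _
    have := lamH_one ρ hρ k
    positivity

lemma time_bound (l s t : ℝ) (hl : 1 ≤ l) (hst : s < t) :
    ∫⁻ θ in Set.Ioc s t, ENNReal.ofReal (Real.exp (-(l * (t - θ))) * (θ - s) ^ (-(1/2) : ℝ))
      ≤ ENNReal.ofReal (6 / (l * Real.sqrt (t - s))) := by
  have hl0 : 0 < l := by linarith
  have hT : 0 < t - s := by linarith
  set A : ℝ := ((t - s) / 2) ^ (-(1/2) : ℝ) with hA
  set E : ℝ := Real.exp (-(l * ((t - s) / 2))) with hE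
  have hA0 : 0 < A := by positivity
  have hE0 : 0 < E := Real.exp_pos _
  set G : ℝ → ℝ := fun θ => A * Real.exp (-(l * (t - θ))) + E * (θ - s) ^ (-(1/2) : ℝ) with hG
  have i1 : IntervalIntegrable (fun θ => A * Real.exp (-(l * (t - θ)))) volume s t :=
    Continuous.intervalIntegrable (by fun_prop) _ _
  have i2' : IntervalIntegrable (fun θ => (θ - s) ^ (-(1/2) : ℝ)) volume s t := by
    have := (intervalIntegral.intervalIntegrable_rpow' (a := 0) (b := t - s)
      (r := (-(1/2) : ℝ)) (by norm_num)).comp_sub_right s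
    simpa using this
  have i2 := i2'.const_mul E
  have iG : IntervalIntegrable G volume s t := i1.add i2
  have step1 : ∫⁻ θ in Set.Ioc s t,
      ENNReal.ofReal (Real.exp (-(l * (t - θ))) * (θ - s) ^ (-(1/2) : ℝ))
      ≤ ∫⁻ θ in Set.Ioc s t, ENNReal.ofReal (G θ) := by
    refine setLIntegral_mono' measurableSet_Ioc fun θ hθ => ENNReal.ofReal_le_ofReal ?_
    have h0 : 0 < θ - s := by linarith [hθ.1]
    have hp : 0 < (θ - s) ^ (-(1/2) : ℝ) := by positivity
    have he := Real.exp_pos (-(l * (t - θ)))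
    simp only [hG]
    rcases le_total ((t - s) / 2) (θ - s) with hc | hc
    · have : (θ - s) ^ (-(1/2) : ℝ) ≤ A :=
        Real.rpow_le_rpow_of_nonpos (by linarith) hc (by norm_num)
      nlinarith
    · have : Real.exp (-(l * (t - θ))) ≤ E := Real.exp_le_exp.2 (by nlinarith)
      nlinarith
  refine step1.trans ?_
  rw [← ofReal_integral_eq_lintegral_ofReal
    ((intervalIntegrable_iff_integrableOn_Ioc_of_le hst.le).1 iG)
    ((ae_restrict_iff' measurableSet_Ioc).2 (Filter.Eventually.of_forall fun θ hθ => ?_))]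
  · refine ENNReal.ofReal_le_ofReal ?_
    rw [← intervalIntegral.integral_of_le hst.le]
    simp only [hG]
    rw [intervalIntegral.integral_add i1 i2, intervalIntegral.integral_const_mul,
      intervalIntegral.integral_const_mul]
    have I1 : ∫ θ in s..t, Real.exp (-(l * (t - θ))) ≤ 1 / l := by
      have hd : ∀ θ ∈ Set.uIcc s t, HasDerivAt (fun θ => Real.exp (-(l * (t - θ))) / l)
          (Real.exp (-(l * (t - θ)))) θ := by
        intro θ _
        have h1 : HasDerivAt (fun θ : ℝ => -(l * (t - θ))) l θ := by
          have := (((hasDerivAt_id θ).const_sub t).const_mul l).neg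
          rw [show -(l * -1) = l by ring] at this
          exact this
        have := h1.exp.div_const l
        rwa [mul_div_assoc, div_self hl0.ne', mul_one] at this
      rw [intervalIntegral.integral_eq_sub_of_hasDerivAt hd
        (Continuous.intervalIntegrable (by fun_prop) _ _)]
      have : 0 < Real.exp (-(l * (t - s))) / l := by positivity
      simp only [sub_self, mul_zero, neg_zero, Real.exp_zero]
      linarith
    have I2 : ∫ θ in s..t, (θ - s) ^ (-(1/2) : ℝ) = 2 * Real.sqrt (t - s) := by
      rw [intervalIntegral.integral_comp_sub_right (fun x => x ^ (-(1/2) : ℝ)) s,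
        integral_rpow (Or.inl (by norm_num)), Real.sqrt_eq_rpow]
      norm_num
      ring
    have hE1 : E ≤ 1 / (l * ((t - s) / 2)) := exp_le_inv_mul (by positivity)
    have hq : 0 < Real.sqrt (t - s) := Real.sqrt_pos.2 hT
    have hsq : Real.sqrt (t - s) * Real.sqrt (t - s) = t - s := Real.mul_self_sqrt hT.le
    have hA1 : A ≤ 2 / Real.sqrt (t - s) := by
      rw [hA, Real.rpow_neg (by positivity), ← Real.sqrt_eq_rpow, ← one_div,
        div_le_div_iff₀ (by positivity) hq, one_mul]
      have : Real.sqrt (t - s) ≤ Real.sqrt (2 ^ 2 * ((t - s) / 2)) :=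
        Real.sqrt_le_sqrt (by linarith)
      rwa [Real.sqrt_mul (by norm_num), Real.sqrt_sq (by norm_num)] at this
    rw [I2]
    calc _ ≤ 2 / Real.sqrt (t - s) * (1 / l)
          + 1 / (l * ((t - s) / 2)) * (2 * Real.sqrt (t - s)) := by
          have I0 : 0 ≤ ∫ θ in s..t, Real.exp (-(l * (t - θ))) :=
            intervalIntegral.integral_nonneg hst.le (fun _ _ => (Real.exp_pos _).le)
          gcongr
      _ = 6 / (l * Real.sqrt (t - s)) := by
        rw [show 1 / (l * ((t - s) / 2))
          = 1 / (l * ((Real.sqrt (t - s) * Real.sqrt (t - s)) / 2)) by rw [hsq]]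
        field_simp
        ring
  · have h0 : 0 < θ - s := by linarith [hθ.1]
    simp only [hG, Pi.zero_apply]
    positivity

theorem fourth_order_kernel_weighted_time_increment (ρ : ℝ) (hρ : 0 ≤ ρ)
    (α : ℝ) (hα0 : 0 < α) (hα1 : α < 3 / 4) :
    ∃ C : ℝ, 0 < C ∧ ∀ s t t' x : ℝ, 0 ≤ s → s < t → t ≤ t' →
      x ∈ Set.Icc (0 : ℝ) 1 →
      (∫ θ in s..t, ∫ r in (0 : ℝ)..1,
          (Hker ρ (t - θ) x r - Hker ρ (t' - θ) x r) ^ 2 * (θ - s) ^ (-(1/2) : ℝ)) ≤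
        C * |t - t'| ^ α / Real.sqrt (t - s) := by
  have hS := lamH_summable ρ hρ α hα1
  have hlp : ∀ k, 0 < lamH ρ k := fun k => by linarith [lamH_one ρ hρ k]
  have hS0 : 0 ≤ ∑' k, lamH ρ k ^ (α - 1) :=
    tsum_nonneg fun k => Real.rpow_nonneg (hlp k).le _
  refine ⟨24 * ∑' k, lamH ρ k ^ (α - 1) + 1, by positivity, ?_⟩
  intro s t t' x _ hst htt _
  obtain ⟨h, hh, rfl⟩ : ∃ h, 0 ≤ h ∧ t' = t + h := ⟨t' - t, by linarith, by ring⟩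
  have habs : |t - (t + h)| = h := by
    rw [show t - (t + h) = -h by ring, abs_neg, abs_of_nonneg hh]
  rw [habs]
  have hq : 0 < Real.sqrt (t - s) := Real.sqrt_pos.2 (by linarith)
  have hha : 0 ≤ h ^ α := Real.rpow_nonneg hh _
  set g : ℕ → ℝ → ℝ := fun k θ => (4 * h ^ α * lamH ρ k ^ α) *
    (Real.exp (-(lamH ρ k * (t - θ))) * (θ - s) ^ (-(1/2) : ℝ)) with hg
  set R : ℝ := (24 * ∑' k, lamH ρ k ^ (α - 1)) * h ^ α / Real.sqrt (t - s) with hR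
  have hRs : Summable fun k => 4 * h ^ α * lamH ρ k ^ α * (6 / (lamH ρ k * Real.sqrt (t - s))) := by
    refine (hS.mul_left (24 * h ^ α / Real.sqrt (t - s))).congr fun k => ?_
    have := hlp k
    rw [Real.rpow_sub_one this.ne']
    field_simp
    ring
  have hR' : R = ∑' k, 4 * h ^ α * lamH ρ k ^ α * (6 / (lamH ρ k * Real.sqrt (t - s))) := by
    have : R = ∑' k, (24 * h ^ α / Real.sqrt (t - s)) * lamH ρ k ^ (α - 1) := by
      rw [tsum_mul_left, hR]; ring
    rw [this]
    refine tsum_congr fun k => ?_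
    have := hlp k
    rw [Real.rpow_sub_one this.ne']
    field_simp
    ring
  have hR0 : 0 ≤ R := by positivity
  have hRC : R ≤ (24 * ∑' k, lamH ρ k ^ (α - 1) + 1) * h ^ α / Real.sqrt (t - s) := by
    rw [hR]
    gcongr
    linarith
  refine le_trans ?_ hRC
  rw [intervalIntegral.integral_of_le hst.le]
  refine (le_abs_self _).trans ?_
  rw [← Real.norm_eq_abs]
  refine (norm_integral_le_lintegral_norm _).trans ?_
  refine ENNReal.toReal_le_of_le_ofReal hR0 ?_
  calc _ ≤ ∫⁻ θ in Set.Ioc s t, ∑' k, ENNReal.ofReal (g k θ) := by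
        rw [setLIntegral_congr (Ioo_ae_eq_Ioc (a := s) (b := t)).symm,
          setLIntegral_congr (Ioo_ae_eq_Ioc (a := s) (b := t)).symm]
        refine setLIntegral_mono' measurableSet_Ioo fun θ hθ => ?_
        have h0 : 0 < θ - s := by linarith [hθ.1]
        have hp : 0 < (θ - s) ^ (-(1/2) : ℝ) := by positivity
        have h1 : 0 < t - θ := by linarith [hθ.2]
        have e : ∀ k, g k θ = 4 * (h ^ α * (lamH ρ k ^ α * Real.exp (-(lamH ρ k * (t - θ)))))
            * (θ - s) ^ (-(1/2) : ℝ) := fun k => by simp only [hg]; ring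
        have ss := ((sum_a ρ hρ α hα1 (t - θ) h1).mul_left (h ^ α)).mul_left 4
        have sg : Summable fun k => g k θ := by
          simp_rw [e]
          exact ss.mul_right _
        rw [← ENNReal.ofReal_tsum_of_nonneg (fun k => ?_) sg]
        · refine ENNReal.ofReal_le_ofReal ?_
          rw [intervalIntegral.integral_mul_const, norm_mul, Real.norm_of_nonneg hp.le,
            Real.norm_of_nonneg (intervalIntegral.integral_nonneg (by norm_num)
              (fun _ _ => sq_nonneg _))]
          simp_rw [e]
          rw [tsum_mul_right]
          refine mul_le_mul_of_nonneg_right ?_ hp.le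
          rw [show t + h - θ = (t - θ) + h by ring]
          exact inner_bound ρ hρ α hα0 hα1 (t - θ) h x h1 hh
        · have := hlp k
          simp only [hg]
          positivity
    _ = ∑' k, ∫⁻ θ in Set.Ioc s t, ENNReal.ofReal (g k θ) := by
        refine lintegral_tsum fun k => ?_
        refine Measurable.aemeasurable ?_
        simp only [hg]
        fun_prop
    _ ≤ ∑' k, ENNReal.ofReal (4 * h ^ α * lamH ρ k ^ α * (6 / (lamH ρ k * Real.sqrt (t - s)))) := by
        refine ENNReal.tsum_le_tsum fun k => ?_
        have hk := hlp k
        have hc : 0 ≤ 4 * h ^ α * lamH ρ k ^ α := by positivity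
        simp only [hg]
        simp_rw [ENNReal.ofReal_mul hc]
        rw [lintegral_const_mul' _ _ ENNReal.ofReal_ne_top]
        gcongr
        exact time_bound _ s t (lamH_one ρ hρ k) hst
    _ = ENNReal.ofReal R := by
        rw [hR', ENNReal.ofReal_tsum_of_nonneg (fun k => ?_) hRs]
        have := hlp k
        positivity
end
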